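/- arXiv:1905.12207 — 7 statements merged into one kernel-verified Lean document; each statement's English description precedes it below -/
import Mathlib

section
/- Let C be a subset of ℝ^n whose (Euclidean) closure is not convex. Then for every M > 0 there exist an injective affine map γ : ℝ → ℝ^n (parametrizing a line L ⊆ ℝ^n), a convex function g : ℝ → ℝ, and points t₀, t₁ ∈ S := γ⁻¹(closure C), such that t₀ is a local minimum point of the restriction of g to S and g(t₀) > g(t₁) + M. (That is, a convex function which is finite on the line L and +∞ off it has arbitrarily bad local minima when restricted to the closure of C.) -/
/-!
Join two points `x`, `y` of the closed nonconvex set by a segment that leaves the set at some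
parameter `r`. The parameters of the line through `x` and `y` that land in the set form a closed
subset of `ℝ`; let `t₀` be its greatest element below `r`. No parameter of this subset lies between
`t₀` and `r`, so every antitone function has a local minimum at `t₀` relative to the subset,
although it may decrease further beyond the gap, at the parameter of `y`. A linear function of
steep negative slope makes that drop as large as desired.
-/

open Set

theorem exists_isGreatest_inter_Iio_of_notMem {α : Type*} [ConditionallyCompleteLinearOrder α]
    [TopologicalSpace α] [OrderTopology α] {S : Set α} {r : α} (hS : IsClosed S)
    (hne : (S ∩ Iio r).Nonempty) (hr : r ∉ S) : ∃ c, IsGreatest (S ∩ Iio r) c := by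
  have h_eq : S ∩ Iio r = S ∩ Iic r := by
    ext t
    exact and_congr_right fun ht ↦ (Ne.le_iff_lt (ne_of_mem_of_not_mem ht hr)).symm
  rw [h_eq] at hne ⊢
  exact ⟨_, (hS.inter isClosed_Iic).isGreatest_csSup hne (bddAbove_Iic.mono inter_subset_right)⟩

theorem isLocalMinOn_of_antitoneOn_of_isGreatest_inter_Iio {α β : Type*} [TopologicalSpace α]
    [LinearOrder α] [ClosedIciTopology α] [Preorder β] {f : α → β} {S : Set α} {c r : α}
    (hf : AntitoneOn f S) (hc : IsGreatest (S ∩ Iio r) c) : IsLocalMinOn f S c := by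
  filter_upwards [self_mem_nhdsWithin, mem_nhdsWithin_of_mem_nhds (Iio_mem_nhds hc.1.2)]
    with t htS htr
  exact hf htS hc.1.1 (hc.2 ⟨htS, htr⟩)

theorem exists_antitone_linearMap_add_lt {𝕜 : Type*} [Field 𝕜] [LinearOrder 𝕜]
    [IsStrictOrderedRing 𝕜] {a b : 𝕜} (hab : a < b) (M : 𝕜) :
    ∃ g : 𝕜 →ₗ[𝕜] 𝕜, Antitone g ∧ g b + M < g a := by
  have hba : 0 < b - a := sub_pos.2 hab
  obtain ⟨k, hk⟩ := exists_gt (max 0 (M / (b - a)))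
  obtain ⟨hk₀, hkM⟩ := max_lt_iff.1 hk
  refine ⟨LinearMap.mul 𝕜 𝕜 (-k), fun s t hst ↦ ?_, ?_⟩
  · exact mul_le_mul_of_nonpos_left hst (neg_nonpos.2 hk₀.le)
  · have h_drop : M < k * (b - a) := (div_lt_iff₀ hba).1 hkM
    simp only [LinearMap.mul_apply']
    linarith

theorem exists_lineMap_notMem_of_not_convex {𝕜 E : Type*} [Ring 𝕜] [PartialOrder 𝕜]
    [AddRightMono 𝕜] [AddCommGroup E] [Module 𝕜 E] {s : Set E} (hs : ¬ Convex 𝕜 s) :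
    ∃ x ∈ s, ∃ y ∈ s, x ≠ y ∧ ∃ r ∈ Icc (0 : 𝕜) 1, AffineMap.lineMap x y r ∉ s := by
  simp only [convex_iff_segment_subset, segment_eq_image_lineMap, image_subset_iff,
    not_subset, not_forall] at hs
  obtain ⟨x, hx, y, hy, r, hr, hrs⟩ := hs
  refine ⟨x, hx, y, hy, ?_, r, hr, hrs⟩
  rintro rfl
  exact hrs (by simpa using hx)

theorem restriction_to_nonconvex_set_has_bad_local_minima_general {E : Type*} [AddCommGroup E]
    [Module ℝ E] [TopologicalSpace E] [IsTopologicalAddGroup E] [ContinuousSMul ℝ E] {s : Set E}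
    (hs : IsClosed s) (hconv : ¬ Convex ℝ s) :
    ∃ γ : ℝ →ᵃ[ℝ] E, Function.Injective γ ∧ ∃ t₀ ∈ γ ⁻¹' s, ∃ t₁ ∈ γ ⁻¹' s,
      ∀ M : ℝ, ∃ g : ℝ →ₗ[ℝ] ℝ, IsLocalMinOn g (γ ⁻¹' s) t₀ ∧ g t₁ + M < g t₀ := by
  obtain ⟨x, hx, y, hy, hxy, r, ⟨hr₀, hr₁⟩, hr⟩ := exists_lineMap_notMem_of_not_convex hconv
  let γ : ℝ →ᵃ[ℝ] E := AffineMap.lineMap x y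
  have h₀ : (0 : ℝ) ∈ γ ⁻¹' s := by simpa [γ] using hx
  have h₁ : (1 : ℝ) ∈ γ ⁻¹' s := by simpa [γ] using hy
  have h_closed : IsClosed (γ ⁻¹' s) := hs.preimage AffineMap.lineMap_continuous
  obtain ⟨t₀, ht₀⟩ := exists_isGreatest_inter_Iio_of_notMem h_closed
    ⟨0, h₀, hr₀.lt_of_ne (ne_of_mem_of_not_mem h₀ hr)⟩ hr
  refine ⟨γ, AffineMap.lineMap_injective ℝ hxy, t₀, ht₀.1.1, 1, h₁, fun M ↦ ?_⟩
  obtain ⟨g, hg, hgM⟩ := exists_antitone_linearMap_add_lt (ht₀.1.2.trans_le hr₁) M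
  have h_min : IsLocalMinOn g (γ ⁻¹' s) t₀ :=
    isLocalMinOn_of_antitoneOn_of_isGreatest_inter_Iio (hg.antitoneOn _) ht₀
  exact ⟨g, h_min, hgM⟩

/-- If the closure of `C ⊆ ℝⁿ` is not convex, then for every `M > 0` there are
an injective affine map `γ : ℝ → ℝⁿ` (parametrizing a line), a convex function `g : ℝ → ℝ`,
and points `t₀ t₁ ∈ S = γ⁻¹(closure C)` such that `t₀` is a local minimum of `g` restricted
to `S` and `g t₀ > g t₁ + M`. -/
theorem restriction_to_nonconvex_set_has_bad_local_minima
    (n : ℕ) (C : Set (Fin n → ℝ)) (hC : ¬ Convex ℝ (closure C)) :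
    ∀ M : ℝ, 0 < M →
      ∃ (γ : ℝ →ᵃ[ℝ] (Fin n → ℝ)) (g : ℝ → ℝ) (t₀ t₁ : ℝ),
        Function.Injective ⇑γ ∧
        ConvexOn ℝ Set.univ g ∧
        t₀ ∈ ⇑γ ⁻¹' (closure C) ∧
        t₁ ∈ ⇑γ ⁻¹' (closure C) ∧
        (∃ U : Set ℝ, IsOpen U ∧ t₀ ∈ U ∧
          ∀ t ∈ U ∩ ⇑γ ⁻¹' (closure C), g t₀ ≤ g t) ∧
        g t₁ + M < g t₀ := by
  intro M _
  obtain ⟨γ, hγ, t₀, ht₀, t₁, ht₁, h⟩ :=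
    restriction_to_nonconvex_set_has_bad_local_minima_general isClosed_closure hC
  obtain ⟨g, hmin, hlt⟩ := h M
  exact ⟨γ, g, t₀, t₁, hγ, g.convexOn convex_univ, ht₀, ht₁, mem_nhdsWithin.1 hmin, hlt⟩
end

section
/- Fix an activation degree r ≥ 1 and an architecture d = (d_0, d_1, …, d_h) of positive integers with h ≥ 1. If the functional space F_{d,r} is a convex subset of Sym_{r^{h−1}}(ℝ^{d_0})^{d_h}, then F_{d,r} contains a nonempty open subset of Sym_{r^{h−1}}(ℝ^{d_0})^{d_h} (i.e., it is thick). Equivalently, if F_{d,r} is not thick, then it is not convex. -/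
/-- The polynomial network map: `net r d W h` is the tuple of `d h` homogeneous polynomials
in `d 0` variables computed by the network with architecture `(d 0, …, d h)`, activation
`ρ_r` (coordinatewise `r`-th power), and weight matrices `W j ∈ ℝ^{d (j+1) × d j}`. -/
noncomputable def net (r : ℕ) (d : ℕ → ℕ)
    (W : ∀ j : ℕ, Matrix (Fin (d (j + 1))) (Fin (d j)) ℝ) :
    (h : ℕ) → Fin (d h) → MvPolynomial (Fin (d 0)) ℝ
  | 0 => fun i => MvPolynomial.X i
  | h + 1 => fun i => ∑ k : Fin (d h), MvPolynomial.C (W h i k) *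
      net r d W h k ^ (if h = 0 then 1 else r)

/-! A functional space is closed under rescaling each output independently, since the last layer is
linear. Closure under midpoints therefore makes it a linear subspace. A network whose layers
beyond the first average their inputs computes `ℓ ^ r ^ h`, for any linear form `ℓ`, at every
output, and rescaling kills all outputs but one. In characteristic zero the `D`-th powers of
linear forms span the forms of degree `D`, so a convex functional space is the whole ambient
space. -/

section PowersSpan

open scoped Pointwise

variable {K : Type*} [Field K]

lemma mem_of_forall_sum_pow_smul_mem {V : Type*} [AddCommGroup V] [Module K V] [Infinite K]
    {S : Submodule K V} {v : ℕ → V} {n : ℕ}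
    (hv : ∀ t : K, ∑ i ∈ Finset.range n, t ^ i • v i ∈ S) {i : ℕ} (hi : i < n) : v i ∈ S := by
  by_contra hmem
  obtain ⟨φ, hφ, hS⟩ := Submodule.exists_le_ker_of_notMem hmem
  let P : Polynomial K := ∑ j ∈ Finset.range n, Polynomial.monomial j (φ (v j))
  have hP : P = 0 := by
    refine Polynomial.funext fun t => ?_
    have hφt : φ (∑ j ∈ Finset.range n, t ^ j • v j) = 0 := hS (hv t)
    simpa [P, Polynomial.eval_finsetSum, mul_comm] using hφt
  have hcoeff : P.coeff i = φ (v i) := by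
    simp [P, Polynomial.finsetSum_coeff, Polynomial.coeff_monomial, hi]
  exact hφ (by rw [← hcoeff, hP, Polynomial.coeff_zero])

variable [CharZero K] {A : Type*} [CommRing A] [Algebra K A]

lemma mul_pow_mem_span_image_pow_succ {M : Submodule K A} {x y : A} (hx : x ∈ M) (hy : y ∈ M)
    (n : ℕ) : x * y ^ n ∈ Submodule.span K ((· ^ (n + 1)) '' (M : Set A)) := by
  set S := Submodule.span K ((· ^ (n + 1)) '' (M : Set A))
  -- `(n + 1) • (x * y ^ n)` is the coefficient of `t` in `(t • x + y) ^ (n + 1)`.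
  have hexpand (t : K) : ∑ i ∈ Finset.range (n + 2),
      t ^ i • (x ^ i * y ^ (n + 1 - i) * ((n + 1).choose i : A)) ∈ S := by
    have hpow : (t • x + y) ^ (n + 1) ∈ S :=
      Submodule.subset_span ⟨_, M.add_mem (M.smul_mem t hx) hy, rfl⟩
    simpa only [add_pow, smul_pow, smul_mul_assoc] using hpow
  have hcoeff : ((n + 1 : ℕ) : K) • (x * y ^ n) ∈ S := by
    have hlinear := mem_of_forall_sum_pow_smul_mem hexpand (i := 1) (by omega)
    rw [Nat.cast_smul_eq_nsmul, nsmul_eq_mul]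
    simpa [mul_comm] using hlinear
  exact (S.smul_mem_iff (Nat.cast_ne_zero.mpr n.succ_ne_zero)).mp hcoeff

theorem submodule_pow_eq_span_image_pow (M : Submodule K A) (n : ℕ) :
    M ^ n = Submodule.span K ((· ^ n) '' (M : Set A)) := by
  apply le_antisymm
  · induction n with
    | zero =>
      rw [pow_zero, Submodule.one_le]
      exact Submodule.subset_span ⟨0, M.zero_mem, pow_zero 0⟩
    | succ n ih =>
      rw [pow_succ']
      calc M * M ^ n
          ≤ M * Submodule.span K ((· ^ n) '' (M : Set A)) := by gcongr
        _ = Submodule.span K ((M : Set A) * (· ^ n) '' (M : Set A)) := by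
          rw [← Submodule.span_mul_span, Submodule.span_eq]
        _ ≤ Submodule.span K ((· ^ (n + 1)) '' (M : Set A)) := by
          rw [Submodule.span_le]
          rintro _ ⟨x, hx, _, ⟨y, hy, rfl⟩, rfl⟩
          exact mul_pow_mem_span_image_pow_succ hx hy n
  · rw [Submodule.span_le]
    rintro _ ⟨x, hx, rfl⟩
    exact Submodule.pow_mem_pow M hx n

theorem homogeneousSubmodule_eq_span_image_pow (σ : Type*) (n : ℕ) :
    MvPolynomial.homogeneousSubmodule σ K n =
      Submodule.span K ((· ^ n) '' (MvPolynomial.homogeneousSubmodule σ K 1 : Set _)) := by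
  rw [← MvPolynomial.homogeneousSubmodule_one_pow, submodule_pow_eq_span_image_pow]

end PowersSpan

section FunctionalSpace

open MvPolynomial

/-- The functional space `F_{d,r}` of the architecture `(d 0, …, d h)`: the tuples of polynomials
computed by its networks. As in `net`, weights are infinite sequences whose entries from index `h`
on are ignored. -/
def functionalSpace (r : ℕ) (d : ℕ → ℕ) (h : ℕ) : Set (Fin (d h) → MvPolynomial (Fin (d 0)) ℝ) :=
  Set.range fun W => net r d W h

variable {r h : ℕ} {d : ℕ → ℕ}

lemma net_congr {W W' : ∀ j : ℕ, Matrix (Fin (d (j + 1))) (Fin (d j)) ℝ}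
    (hW : ∀ j < h, W j = W' j) : net r d W h = net r d W' h := by
  induction h with
  | zero => rfl
  | succ h ih =>
    funext i
    simp only [net, hW h h.lt_succ_self, ih fun j hj => hW j (hj.trans h.lt_succ_self)]

lemma smul_mem_functionalSpace (c : Fin (d (h + 1)) → ℝ)
    {p : Fin (d (h + 1)) → MvPolynomial (Fin (d 0)) ℝ} (hp : p ∈ functionalSpace r d (h + 1)) :
    c • p ∈ functionalSpace r d (h + 1) := by
  obtain ⟨W, rfl⟩ := hp
  let W' := Function.update W h (Matrix.diagonal c * W h)
  have hW' : net r d W' h = net r d W h := net_congr fun j hj => Function.update_of_ne hj.ne _ _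
  refine ⟨W', ?_⟩
  funext i
  simp only [net, hW', W', Function.update_self, Matrix.diagonal_mul, Pi.smul_apply', smul_eq_C_mul,
    Finset.mul_sum, map_mul, mul_assoc]

/-- The linear subspace underlying a functional space that is closed under midpoints. -/
def functionalSubmodule
    (hmid : ∀ p ∈ functionalSpace r d (h + 1), ∀ q ∈ functionalSpace r d (h + 1),
      midpoint ℝ p q ∈ functionalSpace r d (h + 1)) :
    Submodule ℝ (Fin (d (h + 1)) → MvPolynomial (Fin (d 0)) ℝ) where
  carrier := functionalSpace r d (h + 1)
  zero_mem' := by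
    have hscale := smul_mem_functionalSpace (r := r) (d := d) (h := h) 0 ⟨0, rfl⟩
    rwa [zero_smul] at hscale
  add_mem' {p q} hp hq := by
    have hdouble := smul_mem_functionalSpace (fun _ => 2) (hmid p hp q hq)
    convert hdouble using 1
    rw [midpoint_eq_smul_add]
    ext1 i
    simp [smul_smul]
  smul_mem' c _ hp := smul_mem_functionalSpace (fun _ => c) hp

lemma linear_form_pow_mem_functionalSpace (hd : ∀ j < h, 0 < d (j + 1))
    {ℓ : MvPolynomial (Fin (d 0)) ℝ} (hℓ : ℓ.IsHomogeneous 1) :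
    (fun _ => ℓ ^ r ^ h) ∈ functionalSpace r d (h + 1) := by
  rw [← mem_homogeneousSubmodule, homogeneousSubmodule_one_eq_span_X,
    Submodule.mem_span_range_iff_exists_fun] at hℓ
  obtain ⟨a, rfl⟩ := hℓ
  -- Every unit of a layer computes the same polynomial, so averaging reproduces it.
  let W : ∀ j : ℕ, Matrix (Fin (d (j + 1))) (Fin (d j)) ℝ
    | 0 => Matrix.of fun _ => a
    | j + 1 => Matrix.of fun _ _ => (d (j + 1) : ℝ)⁻¹
  suffices net r d W (h + 1) = fun _ => (∑ k, a k • X k) ^ r ^ h from ⟨W, this⟩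
  induction h with
  | zero => funext i; simp [net, W, smul_eq_C_mul]
  | succ h ih =>
    have hwidth : (d (h + 1) : ℝ) ≠ 0 := Nat.cast_ne_zero.mpr (hd h h.lt_succ_self).ne'
    funext i
    rw [net, ih fun j hj => hd j (hj.trans h.lt_succ_self)]
    simp [W, ← smul_eq_C_mul, ← Nat.cast_smul_eq_nsmul ℝ, smul_smul, hwidth, pow_succ, pow_mul]

lemma single_linear_form_pow_mem_functionalSpace (hd : ∀ j < h, 0 < d (j + 1))
    {ℓ : MvPolynomial (Fin (d 0)) ℝ} (hℓ : ℓ.IsHomogeneous 1) (i : Fin (d (h + 1))) :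
    Pi.single i (ℓ ^ r ^ h) ∈ functionalSpace r d (h + 1) := by
  convert smul_mem_functionalSpace (Pi.single i 1)
    (linear_form_pow_mem_functionalSpace (r := r) hd hℓ) using 1
  ext1 j
  rcases eq_or_ne j i with rfl | hji
  · simp
  · simp [hji]

theorem convex_functional_space_is_thick_general (hd : ∀ j < h, 0 < d (j + 1))
    (hmid : ∀ p ∈ functionalSpace r d (h + 1), ∀ q ∈ functionalSpace r d (h + 1),
      midpoint ℝ p q ∈ functionalSpace r d (h + 1))
    {q : Fin (d (h + 1)) → MvPolynomial (Fin (d 0)) ℝ}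
    (hq : ∀ i, (q i).IsHomogeneous (r ^ h)) : q ∈ functionalSpace r d (h + 1) := by
  let F := functionalSubmodule hmid
  have hforms (i) : homogeneousSubmodule (Fin (d 0)) ℝ (r ^ h) ≤
      F.comap (LinearMap.single ℝ (fun _ => MvPolynomial (Fin (d 0)) ℝ) i) := by
    rw [homogeneousSubmodule_eq_span_image_pow, Submodule.span_le]
    rintro _ ⟨ℓ, hℓ, rfl⟩
    exact single_linear_form_pow_mem_functionalSpace hd hℓ i
  have hsum : ∑ i, Pi.single i (q i) ∈ F := F.sum_mem fun i _ => hforms i (hq i)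
  rwa [Finset.univ_sum_single] at hsum

end FunctionalSpace

/-- if the functional space `F_{d,r}` is convex, then it is thick, i.e. it
contains a nonempty open subset of `Sym_{r^{h-1}}(ℝ^{d₀})^{d_h}` (openness expressed via a
coefficientwise `ε`-box around a point of the functional space). -/
theorem convex_functional_space_is_thick
    (r h : ℕ) (hr : 1 ≤ r) (hh : 1 ≤ h) (d : ℕ → ℕ) (hd : ∀ j, 0 < d j)
    (hconv : Convex ℝ {p : Fin (d h) → MvPolynomial (Fin (d 0)) ℝ |
      ∃ W : ∀ j : ℕ, Matrix (Fin (d (j + 1))) (Fin (d j)) ℝ, net r d W h = p}) :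
    ∃ p : Fin (d h) → MvPolynomial (Fin (d 0)) ℝ,
      (∃ W : ∀ j : ℕ, Matrix (Fin (d (j + 1))) (Fin (d j)) ℝ, net r d W h = p) ∧
      ∃ ε : ℝ, 0 < ε ∧
        ∀ q : Fin (d h) → MvPolynomial (Fin (d 0)) ℝ,
          (∀ j, (q j).IsHomogeneous (r ^ (h - 1))) →
          (∀ j m, |MvPolynomial.coeff m (q j) - MvPolynomial.coeff m (p j)| < ε) →
          ∃ W : ∀ j : ℕ, Matrix (Fin (d (j + 1))) (Fin (d j)) ℝ, net r d W h = q := by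
  obtain ⟨h, rfl⟩ := Nat.exists_eq_add_of_le' hh
  have hfill {q} (hq : ∀ i, (q i).IsHomogeneous (r ^ h)) : q ∈ functionalSpace r d (h + 1) :=
    convex_functional_space_is_thick_general (fun j _ => hd (j + 1))
      (fun _ hp _ hq => hconv.midpoint_mem hp hq) hq
  exact ⟨0, hfill fun _ => MvPolynomial.isHomogeneous_zero .., 1, one_pos, fun _ hq _ => hfill hq⟩
end

section
/- Fix an activation degree r ≥ 1 and an architecture d = (d_0, d_1, …, d_{h−1}, d_h) of positive integers with h ≥ 2, and suppose the functional space F_{d,r} contains a nonempty open subset of Sym_{r^{h−1}}(ℝ^{d_0})^{d_h} (i.e., the functional variety is filling / F_{d,r} is thick). Then the architecture d' = (d_0, 2d_1, …, 2d_{h−1}, d_h) obtained by doubling all intermediate widths has a filling functional space: F_{d',r} = Sym_{r^{h−1}}(ℝ^{d_0})^{d_h}, i.e., every d_h-tuple of homogeneous degree-r^{h−1} polynomials in d_0 variables is exactly realized by some choice of weights for the architecture d'. -/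
/-- The architecture obtained from `(d 0, …, d h)` by doubling all intermediate widths. -/
def double (d : ℕ → ℕ) (h : ℕ) : ℕ → ℕ := fun j => if j = 0 ∨ j = h then d j else 2 * d j

/-- The architecture `(d 0, k * d 1, …, k * d (h - 1), d h)`, in which `k` networks with
architecture `(d 0, …, d h)` can be run side by side; `double` is the case `k = 2`. -/
def widen (k : ℕ) (d : ℕ → ℕ) (h : ℕ) : ℕ → ℕ := fun j => if j = 0 ∨ j = h then d j else k * d j

theorem widen_zero (k : ℕ) (d : ℕ → ℕ) (h : ℕ) : widen k d h 0 = d 0 := rfl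

theorem widen_self (k : ℕ) (d : ℕ → ℕ) (h : ℕ) : widen k d h h = d h := by simp [widen]

theorem widen_hidden (k : ℕ) (d : ℕ → ℕ) {n j : ℕ} (hj : j ≤ n) :
    widen k d (n + 2) (j + 1) = d (j + 1) * k := by
  simp [widen, mul_comm, show j ≠ n + 1 by lia]

theorem net_succ_apply (r : ℕ) (d : ℕ → ℕ)
    (W : ∀ j : ℕ, Matrix (Fin (d (j + 1))) (Fin (d j)) ℝ) (h : ℕ) (i : Fin (d (h + 1))) :
    net r d W (h + 1) i = ∑ k : Fin (d h), MvPolynomial.C (W h i k) *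
      net r d W h k ^ (if h = 0 then 1 else r) :=
  rfl

theorem net_succ_isHomogeneous (r : ℕ) (d : ℕ → ℕ)
    (W : ∀ j : ℕ, Matrix (Fin (d (j + 1))) (Fin (d j)) ℝ) (h : ℕ) (i : Fin (d (h + 1))) :
    (net r d W (h + 1) i).IsHomogeneous (r ^ h) := by
  induction h with
  | zero =>
    refine MvPolynomial.IsHomogeneous.sum _ _ _ fun l _ => ?_
    simpa [net] using (MvPolynomial.isHomogeneous_X ℝ l).C_mul (W 0 i l)
  | succ h ih =>
    refine MvPolynomial.IsHomogeneous.sum _ _ _ fun l _ => ?_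
    simpa [pow_succ] using ((ih l).pow r).C_mul (W (h + 1) i l)

/-- The neurons of a hidden layer of `widen k d (n + 2)`: the pair `(l, s)` is the neuron `l` of the
`s`-th copy. The hidden layers are numbered `j + 1` for `j ≤ n`. -/
def hiddenEquiv (k : ℕ) (d : ℕ → ℕ) {n j : ℕ} (hj : j ≤ n) :
    Fin (d (j + 1)) × Fin k ≃ Fin (widen k d (n + 2) (j + 1)) :=
  finProdFinEquiv.trans (finCongr (widen_hidden k d hj).symm)

/-- The weights on the architecture `widen k d (n + 2)` that run the networks with weights
`U 0, …, U (k - 1)` side by side and output the linear combination of their outputs with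
coefficients `c`. Only the layers `0, …, n + 1` matter; the others get the weight `0`. -/
noncomputable def parallelWeights {k : ℕ} (d : ℕ → ℕ) (n : ℕ) (c : Fin k → ℝ)
    (U : Fin k → ∀ j : ℕ, Matrix (Fin (d (j + 1))) (Fin (d j)) ℝ) :
    ∀ j : ℕ, Matrix (Fin (widen k d (n + 2) (j + 1))) (Fin (widen k d (n + 2) j)) ℝ
  | 0 => (Matrix.of fun (p : Fin (d 1) × Fin k) i => U p.2 0 p.1 i).submatrix
      (hiddenEquiv k d n.zero_le).symm (Fin.cast (widen_zero k d (n + 2)))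
  | j + 1 =>
    if hj : j < n then
      (Matrix.blockDiagonal fun s => U s (j + 1)).submatrix
        (hiddenEquiv k d (Nat.succ_le_of_lt hj)).symm (hiddenEquiv k d hj.le).symm
    else if hn : j = n then
      (Matrix.of fun i (p : Fin (d (j + 1)) × Fin k) => c p.2 * U p.2 (j + 1) i p.1).submatrix
        (Fin.cast (by rw [hn, widen_self])) (hiddenEquiv k d hn.le).symm
    else 0

section Parallel

variable {k : ℕ} (r : ℕ) (d : ℕ → ℕ) (n : ℕ) (c : Fin k → ℝ)
  (U : Fin k → ∀ j : ℕ, Matrix (Fin (d (j + 1))) (Fin (d j)) ℝ)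

theorem rename_net_parallelWeights_hidden {j : ℕ} (hj : j ≤ n) (l : Fin (d (j + 1))) (s : Fin k) :
    MvPolynomial.rename (Fin.cast (widen_zero k d (n + 2)))
        (net r (widen k d (n + 2)) (parallelWeights d n c U) (j + 1) (hiddenEquiv k d hj (l, s))) =
      net r d (U s) (j + 1) l := by
  induction j generalizing s with
  | zero =>
    rw [net_succ_apply, ← (finCongr (widen_zero k d (n + 2)).symm).sum_comp]
    simp [parallelWeights, net]
  | succ j ih =>
    have hj' : j < n := hj
    rw [net_succ_apply, ← (hiddenEquiv k d hj'.le).sum_comp, Fintype.sum_prod_type, map_sum]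
    simp [ih hj'.le, parallelWeights, hj', Matrix.blockDiagonal_apply, apply_ite MvPolynomial.C,
      net_succ_apply _ _ _ (j + 1)]

theorem rename_net_parallelWeights (i : Fin (widen k d (n + 2) (n + 2))) :
    MvPolynomial.rename (Fin.cast (widen_zero k d (n + 2)))
        (net r (widen k d (n + 2)) (parallelWeights d n c U) (n + 2) i) =
      ∑ s, c s • net r d (U s) (n + 2) (Fin.cast (widen_self k d (n + 2)) i) := by
  rw [net_succ_apply, ← (hiddenEquiv k d le_rfl).sum_comp, Fintype.sum_prod_type_right, map_sum]
  simp [rename_net_parallelWeights_hidden, parallelWeights, net_succ_apply _ _ _ (n + 1),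
    MvPolynomial.smul_eq_C_mul, Finset.mul_sum, mul_assoc]

theorem net_parallelWeights (i : Fin (widen k d (n + 2) (n + 2))) :
    net r (widen k d (n + 2)) (parallelWeights d n c U) (n + 2) i =
      (∑ s, c s • net r d (U s) (n + 2) (Fin.cast (widen_self k d (n + 2)) i) :
        MvPolynomial (Fin (d 0)) ℝ) :=
  -- Renaming along `Fin.cast (widen_zero k d (n + 2))` is the identity, as `widen_zero` is a `rfl`.
  (MvPolynomial.rename_id_apply _).symm.trans (rename_net_parallelWeights r d n c U i)

end Parallel

theorem finite_range_coeff {R σ : Type*} [CommSemiring R] (p : MvPolynomial σ R) :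
    (Set.range fun m => p.coeff m).Finite :=
  Finsupp.finite_range _

theorem exists_pos_forall_abs_coeff_smul_lt {ι σ 𝕜 : Type*} [Finite ι] [Field 𝕜] [LinearOrder 𝕜]
    [IsStrictOrderedRing 𝕜] (q : ι → MvPolynomial σ 𝕜) {ε : 𝕜} (hε : 0 < ε) :
    ∃ t : 𝕜, 0 < t ∧ ∀ j m, |(t • q j).coeff m| < ε := by
  obtain ⟨B, hB⟩ := (Set.finite_iUnion fun j => (finite_range_coeff (q j)).image abs).bddAbove
  have hqB (j m) : |(q j).coeff m| ≤ B :=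
    hB (Set.mem_iUnion_of_mem j (Set.mem_image_of_mem _ (Set.mem_range_self m)))
  obtain ⟨t, ht, htB⟩ := exists_pos_mul_lt hε B
  refine ⟨t, ht, fun j m => ?_⟩
  calc |(t • q j).coeff m| = |(q j).coeff m| * t := by
        rw [MvPolynomial.coeff_smul, smul_eq_mul, abs_mul, abs_of_pos ht, mul_comm]
    _ ≤ B * t := by gcongr; exact hqB j m
    _ < ε := htB

/-- if architecture `d = (d_0, …, d_h)` has a thick functional space
(it contains a nonempty open subset of the ambient space, expressed via a coefficientwise
`ε`-box around one of its points), then the doubled architecture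
`d' = (d_0, 2d_1, …, 2d_{h-1}, d_h)` has a *filling functional space*: every `d_h`-tuple of
homogeneous degree-`r^{h-1}` polynomials in `d_0` variables is exactly realized by weights. -/
theorem doubling_thick_architecture_fills
    (r h : ℕ) (hr : 1 ≤ r) (hh : 2 ≤ h) (d : ℕ → ℕ) (hd : ∀ j, 0 < d j)
    (hthick : ∃ p : Fin (d h) → MvPolynomial (Fin (d 0)) ℝ,
      (∃ W : ∀ j : ℕ, Matrix (Fin (d (j + 1))) (Fin (d j)) ℝ, net r d W h = p) ∧
      ∃ ε : ℝ, 0 < ε ∧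
        ∀ q : Fin (d h) → MvPolynomial (Fin (d 0)) ℝ,
          (∀ j, (q j).IsHomogeneous (r ^ (h - 1))) →
          (∀ j m, |MvPolynomial.coeff m (q j) - MvPolynomial.coeff m (p j)| < ε) →
          ∃ W : ∀ j : ℕ, Matrix (Fin (d (j + 1))) (Fin (d j)) ℝ, net r d W h = q) :
    ∀ q : Fin (d h) → MvPolynomial (Fin (d 0)) ℝ,
      (∀ j, (q j).IsHomogeneous (r ^ (h - 1))) →
      ∃ W' : ∀ j : ℕ, Matrix (Fin (double d h (j + 1))) (Fin (double d h j)) ℝ,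
        ∀ i : Fin (double d h h),
          net r (double d h) W' h i = q (Fin.cast (by simp [double]) i) := by
  obtain ⟨n, rfl⟩ := Nat.exists_eq_add_of_le' hh
  obtain ⟨p, ⟨U, rfl⟩, ε, hε, hbox⟩ := hthick
  intro q hq
  obtain ⟨t, ht, htq⟩ := exists_pos_forall_abs_coeff_smul_lt q hε
  have hpq (j) : (net r d U (n + 2) j + t • q j).IsHomogeneous (r ^ (n + 1)) :=
    (net_succ_isHomogeneous r d U (n + 1) j).add
      ((MvPolynomial.homogeneousSubmodule _ ℝ _).smul_mem t (hq j))
  obtain ⟨V, hV⟩ := hbox _ hpq fun j m => by simpa using htq j m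
  have hUV (j) : ∑ s, ![-t⁻¹, t⁻¹] s • net r d (![U, V] s) (n + 2) j = q j := by
    simp [hV, ht.ne']
  exact ⟨parallelWeights d n ![-t⁻¹, t⁻¹] ![U, V],
    fun i => (net_parallelWeights r d n _ _ i).trans (hUV _)⟩
end

section
/- For all positive integers d, k, s there exists an integer r̃ = r̃(d, k, s) with the following property: whenever p_1, …, p_k ∈ ℝ[x_1, …, x_d] are nonzero homogeneous polynomials, all of the same degree s, no two of which are linearly dependent over ℝ (i.e., p_i and p_j are not scalar multiples of each other for i ≠ j), then for every integer r > r̃ the polynomials p_1^r, …, p_k^r are linearly independent over ℝ. -/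
/-! In a relation `∑ gᵢ fᵢ ^ (n + 1) = 0`, taking the Wronskian of every term with one fixed term
`gⱼ fⱼ ^ (n + 1)` kills that term, and `fⱼ ^ n` cancels from what is left: the result is a shorter
relation among the `fᵢ ^ n`, whose coefficients have degree bounded independently of `n`. By
induction these coefficients vanish for every partial derivative, so that `gᵢ fᵢ ^ (n + 1)` is a
scalar multiple of `gⱼ fⱼ ^ (n + 1)`; once `n + 1` exceeds the degrees of `gᵢ` and `gⱼ`, unique
factorization makes `fᵢ` a scalar multiple of `fⱼ`. -/

section Wronskian

variable {R A : Type*} [CommSemiring R] [CommRing A] [Algebra R A] (D : Derivation R A A)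

/-- The Wronskian of two elements of a commutative algebra with respect to a derivation, with the
sign convention of `Polynomial.wronskian`. -/
def wronskian (a b : A) : A :=
  a * D b - D a * b

theorem wronskian_mul_mul_left (q a b : A) :
    wronskian D (q * a) (q * b) = q ^ 2 * wronskian D a b := by
  simp only [wronskian, Derivation.leibniz, smul_eq_mul]
  ring

theorem sum_wronskian_eq_zero {ι : Type*} {t : Finset ι} {j : ι} {hj : j ∉ t} {u : ι → A}
    (h : ∑ i ∈ t.cons j hj, u i = 0) : ∑ i ∈ t, wronskian D (u i) (u j) = 0 := by
  have hsum : ∑ i ∈ t, u i = -u j := by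
    rw [Finset.sum_cons] at h
    exact eq_neg_of_add_eq_zero_right h
  simp only [wronskian, Finset.sum_sub_distrib, ← Finset.sum_mul, ← map_sum, hsum, map_neg]
  ring

/-- The Wronskian of `g * f ^ (n + 1)` and `G * F ^ (n + 1)` with its factor `f ^ n * F ^ n`
removed. -/
def reducedWronskian (n : ℕ) (g f G F : A) : A :=
  wronskian D g G * (f * F) + (n + 1) • (g * G * wronskian D f F)

theorem wronskian_mul_pow_succ (n : ℕ) (g f G F : A) :
    wronskian D (g * f ^ (n + 1)) (G * F ^ (n + 1)) =
      F ^ n * (reducedWronskian D n g f G F * f ^ n) := by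
  simp only [wronskian, reducedWronskian, Derivation.leibniz, Derivation.leibniz_pow, smul_eq_mul,
    nsmul_eq_mul, Nat.add_sub_cancel]
  ring

theorem sum_reducedWronskian_mul_pow_eq_zero [NoZeroDivisors A] {ι : Type*} {t : Finset ι} {j : ι}
    {hj : j ∉ t} {g f : ι → A} {n : ℕ} (hf : f j ≠ 0)
    (h : ∑ i ∈ t.cons j hj, g i * f i ^ (n + 1) = 0) :
    ∑ i ∈ t, reducedWronskian D n (g i) (f i) (g j) (f j) * f i ^ n = 0 := by
  have hsum := sum_wronskian_eq_zero D h
  simp only [wronskian_mul_pow_succ, ← Finset.mul_sum] at hsum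
  exact (mul_eq_zero.mp hsum).resolve_left (pow_ne_zero n hf)

end Wronskian

section Degree

open MvPolynomial

variable {σ R : Type*}

theorem totalDegree_pderiv_le [CommSemiring R] (i : σ) (p : MvPolynomial σ R) :
    (pderiv i p).totalDegree ≤ p.totalDegree - 1 := by
  refine Finset.sup_le fun m hm => Nat.le_sub_one_of_lt ?_
  have hm' : m + Finsupp.single i 1 ∈ p.support := by
    rw [mem_support_iff, coeff_pderiv] at hm
    exact mem_support_iff.mpr (left_ne_zero_of_mul hm)
  have hdeg := le_totalDegree hm'
  rw [Finsupp.sum_add_index' (by simp) (by simp), Finsupp.sum_single_index rfl] at hdeg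
  exact hdeg

theorem totalDegree_wronskian_pderiv_le [CommRing R] (i : σ) (p q : MvPolynomial σ R) :
    (wronskian (pderiv i) p q).totalDegree ≤ p.totalDegree + q.totalDegree := by
  have hp := totalDegree_pderiv_le i p
  have hq := totalDegree_pderiv_le i q
  refine (totalDegree_sub _ _).trans (max_le ?_ ?_) <;>
    refine (totalDegree_mul _ _).trans ?_ <;> lia

theorem totalDegree_reducedWronskian_pderiv_le [CommRing R] {a b : ℕ} (i : σ) (n : ℕ)
    {g f G F : MvPolynomial σ R} (hg : g.totalDegree ≤ a) (hf : f.totalDegree ≤ b)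
    (hG : G.totalDegree ≤ a) (hF : F.totalDegree ≤ b) :
    (reducedWronskian (pderiv i) n g f G F).totalDegree ≤ 2 * a + 2 * b := by
  have hgG := totalDegree_wronskian_pderiv_le i g G
  have hfF := totalDegree_wronskian_pderiv_le i f F
  have hgG' := totalDegree_mul g G
  have hfF' := totalDegree_mul f F
  refine (totalDegree_add _ _).trans (max_le ?_ ((totalDegree_smul_le _ _).trans ?_)) <;>
    refine (totalDegree_mul _ _).trans ?_ <;> lia

theorem totalDegree_eq_zero_of_forall_pderiv_eq_zero [CommSemiring R] [NoZeroDivisors R]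
    [CharZero R] {p : MvPolynomial σ R} (h : ∀ i, pderiv i p = 0) : p.totalDegree = 0 := by
  refine (totalDegree_eq_zero_iff _ p).mpr fun m hm i => by_contra fun hmi => ?_
  have hcoeff := coeff_pderiv (i := i) p (m - Finsupp.single i 1)
  rw [h i, coeff_zero, Finsupp.sub_add_single_one_cancel hmi] at hcoeff
  exact mul_ne_zero (mem_support_iff.mp hm) (Nat.cast_add_one_ne_zero _) hcoeff.symm

theorem pderiv_eq_zero_of_dvd [CommSemiring R] [NoZeroDivisors R] {p : MvPolynomial σ R} {i : σ}
    (h : p ∣ pderiv i p) : pderiv i p = 0 := by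
  by_contra hne
  have hle := totalDegree_le_of_dvd_of_isDomain h hne
  have hlt := totalDegree_pderiv_le i p
  have hC := totalDegree_eq_zero_iff_eq_C.mp (by lia : p.totalDegree = 0)
  exact hne (by rw [hC, pderiv_C])

theorem totalDegree_pow_of_noZeroDivisors [CommSemiring R] [NoZeroDivisors R]
    (p : MvPolynomial σ R) (n : ℕ) : (p ^ n).totalDegree = n * p.totalDegree := by
  cases exists_wellFoundedGT σ
  simp only [← degree_degLexDegree, MonomialOrder.degree_pow, map_nsmul, smul_eq_mul]

theorem totalDegree_eq_zero_of_pow_dvd [CommSemiring R] [NoZeroDivisors R] {p q : MvPolynomial σ R}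
    {r : ℕ} (hq : q ≠ 0) (hr : q.totalDegree < r) (h : p ^ r ∣ q) : p.totalDegree = 0 := by
  have hle := totalDegree_le_of_dvd_of_isDomain h hq
  rw [totalDegree_pow_of_noZeroDivisors] at hle
  by_contra hp
  exact (hle.trans_lt hr).not_ge (Nat.le_mul_of_pos_right r (Nat.pos_of_ne_zero hp))

end Degree

section Proportional

open MvPolynomial

variable {σ K : Type*} [Field K]

theorem exists_eq_smul_of_totalDegree_eq_zero {a b : MvPolynomial σ K} (hb : b ≠ 0)
    (ha' : a.totalDegree = 0) (hb' : b.totalDegree = 0) : ∃ c : K, a = c • b := by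
  obtain ⟨α, rfl⟩ : ∃ α, a = C α := ⟨_, totalDegree_eq_zero_iff_eq_C.mp ha'⟩
  obtain ⟨β, rfl⟩ : ∃ β, b = C β := ⟨_, totalDegree_eq_zero_iff_eq_C.mp hb'⟩
  exact ⟨α / β, by rw [smul_eq_C_mul, ← C_mul, div_mul_cancel₀ _ (C_ne_zero.mp hb)]⟩

theorem exists_eq_smul_of_wronskian_pderiv_eq_zero [CharZero K] {u v : MvPolynomial σ K}
    (hv : v ≠ 0) (h : ∀ i, wronskian (pderiv i) u v = 0) : ∃ c : K, u = c • v := by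
  obtain ⟨a, b, q, hab, rfl, rfl⟩ := UniqueFactorizationMonoid.exists_reduced_factors' u v hv
  have hcross (i : σ) : a * pderiv i b = pderiv i a * b := by
    have hi := h i
    rw [wronskian_mul_mul_left] at hi
    exact sub_eq_zero.mp
      ((mul_eq_zero.mp hi).resolve_left (pow_ne_zero 2 (left_ne_zero_of_mul hv)))
  have ha : a.totalDegree = 0 := totalDegree_eq_zero_of_forall_pderiv_eq_zero fun i =>
    pderiv_eq_zero_of_dvd (hab.dvd_of_dvd_mul_right (Dvd.intro _ (hcross i)))
  have hb : b.totalDegree = 0 := totalDegree_eq_zero_of_forall_pderiv_eq_zero fun i =>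
    pderiv_eq_zero_of_dvd (hab.symm.dvd_of_dvd_mul_left (Dvd.intro_left _ (hcross i).symm))
  obtain ⟨c, rfl⟩ := exists_eq_smul_of_totalDegree_eq_zero (right_ne_zero_of_mul hv) ha hb
  exact ⟨c, mul_smul_comm c q b⟩

theorem exists_eq_smul_of_mul_pow_eq_mul_pow {f F g G : MvPolynomial σ K} {r : ℕ} (hF : F ≠ 0)
    (hg : g ≠ 0) (hgr : g.totalDegree < r) (hGr : G.totalDegree < r)
    (h : g * f ^ r = G * F ^ r) : ∃ c : K, f = c • F := by
  rcases eq_or_ne G 0 with rfl | hG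
  · rw [zero_mul] at h
    exact ⟨0, by rw [zero_smul, eq_zero_of_pow_eq_zero ((mul_eq_zero.mp h).resolve_left hg)]⟩
  obtain ⟨a, b, q, hab, rfl, rfl⟩ := UniqueFactorizationMonoid.exists_reduced_factors' f F hF
  have hcancel : g * a ^ r = G * b ^ r := by
    refine mul_left_cancel₀ (pow_ne_zero r (left_ne_zero_of_mul hF)) ?_
    linear_combination h
  have ha : a.totalDegree = 0 := totalDegree_eq_zero_of_pow_dvd hG hGr
    (hab.pow.dvd_of_dvd_mul_right (Dvd.intro_left _ hcancel))
  have hb : b.totalDegree = 0 := totalDegree_eq_zero_of_pow_dvd hg hgr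
    (hab.symm.pow.dvd_of_dvd_mul_right (Dvd.intro_left _ hcancel.symm))
  obtain ⟨c, rfl⟩ := exists_eq_smul_of_totalDegree_eq_zero (right_ne_zero_of_mul hF) ha hb
  exact ⟨c, mul_smul_comm c q b⟩

theorem exists_eq_smul_of_reducedWronskian_eq_zero [CharZero K] {f F g G : MvPolynomial σ K}
    {n : ℕ} (hF : F ≠ 0) (hg : g ≠ 0) (hG : G ≠ 0) (hgn : g.totalDegree ≤ n)
    (hGn : G.totalDegree ≤ n) (h : ∀ i, reducedWronskian (pderiv i) n g f G F = 0) :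
    ∃ c : K, f = c • F := by
  obtain ⟨c, hc⟩ : ∃ c : K, g * f ^ (n + 1) = c • (G * F ^ (n + 1)) :=
    exists_eq_smul_of_wronskian_pderiv_eq_zero (mul_ne_zero hG (pow_ne_zero _ hF)) fun i => by
      rw [wronskian_mul_pow_succ, h i, zero_mul, mul_zero]
  refine exists_eq_smul_of_mul_pow_eq_mul_pow hF hg (Nat.lt_succ_of_le hgn)
    (Nat.lt_succ_of_le ((totalDegree_smul_le c G).trans hGn)) ?_
  rw [hc, smul_mul_assoc]

end Proportional

section HighPowers

open MvPolynomial

variable {σ ι K : Type*} [Field K] [CharZero K] {f : ι → MvPolynomial σ K} {s : ℕ}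

-- The threshold `B(k, a) = 2 ^ k * (a + 2 * s) + k` solves `B(k + 1, a) = B(k, 2 * a + 2 * s) + 1`:
-- one elimination lowers the exponent by `1` and raises the degree bound `a` to `2 * a + 2 * s`.
theorem eq_zero_of_sum_mul_pow_eq_zero (hf0 : ∀ i, f i ≠ 0) (hfs : ∀ i, (f i).totalDegree ≤ s)
    (hf : Pairwise fun i j => ∀ c : K, f i ≠ c • f j) (t : Finset ι) {a r : ℕ}
    {g : ι → MvPolynomial σ K} (hg : ∀ i, (g i).totalDegree ≤ a)
    (hr : 2 ^ t.card * (a + 2 * s) + t.card < r) (h : ∑ i ∈ t, g i * f i ^ r = 0) :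
    ∀ i ∈ t, g i = 0 := by
  induction t using Finset.cons_induction generalizing a r g with
  | empty => simp
  | cons j t hj ih =>
    rw [Finset.card_cons, pow_succ] at hr
    have hle : a + 2 * s ≤ 2 ^ t.card * (a + 2 * s) := Nat.le_mul_of_pos_left _ (by positivity)
    obtain ⟨n, rfl⟩ : ∃ n, r = n + 1 := ⟨r - 1, by lia⟩
    have han : a ≤ n := by lia
    have hw (x : σ) : ∀ i ∈ t, reducedWronskian (pderiv x) n (g i) (f i) (g j) (f j) = 0 :=
      ih (a := 2 * a + 2 * s)
        (fun i => totalDegree_reducedWronskian_pderiv_le x n (hg i) (hfs i) (hg j) (hfs j))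
        (by lia) (sum_reducedWronskian_mul_pow_eq_zero _ (hf0 j) h)
    have hgj : g j = 0 := by
      by_contra hgj
      have hgt : ∀ i ∈ t, g i = 0 := fun i hi => by_contra fun hgi => by
        obtain ⟨c, hc⟩ := exists_eq_smul_of_reducedWronskian_eq_zero (hf0 j) hgi hgj
          ((hg i).trans han) ((hg j).trans han) fun x => hw x i hi
        exact hf (ne_of_mem_of_not_mem hi hj) c hc
      rw [Finset.sum_cons, Finset.sum_eq_zero fun i hi => by rw [hgt i hi, zero_mul], add_zero] at h
      exact mul_ne_zero hgj (pow_ne_zero _ (hf0 j)) h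
    rw [Finset.sum_cons, hgj, zero_mul, zero_add] at h
    exact (Finset.forall_mem_cons hj _).mpr ⟨hgj, ih hg (by lia) h⟩

theorem high_powers_of_pairwise_independent_forms_are_independent_general [Fintype ι]
    (hf0 : ∀ i, f i ≠ 0) (hfs : ∀ i, (f i).totalDegree ≤ s)
    (hf : Pairwise fun i j => ∀ c : K, f i ≠ c • f j) {r : ℕ}
    (hr : 2 ^ (Fintype.card ι + 1) * s + Fintype.card ι < r) :
    LinearIndependent K fun i => f i ^ r := by
  refine Fintype.linearIndependent_iff.mpr fun c hc i => ?_
  have hbound : 2 ^ Fintype.card ι * (0 + 2 * s) + Fintype.card ι < r := by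
    rwa [zero_add, ← mul_assoc, ← pow_succ]
  have hsum : ∑ i, C (c i) * f i ^ r = 0 := by
    simpa only [smul_eq_C_mul] using hc
  exact C_eq_zero.mp (eq_zero_of_sum_mul_pow_eq_zero hf0 hfs hf Finset.univ
    (fun i => (totalDegree_C (c i)).le) hbound hsum i (Finset.mem_univ i))

end HighPowers

/-- for all positive integers `d, k, s` there is `r̃ = r̃(d,k,s)` such that for
any nonzero homogeneous polynomials `p_1, …, p_k ∈ ℝ[x_1, …, x_d]` of common degree `s`, no
two of which are linearly dependent, the powers `p_1^r, …, p_k^r` are linearly independent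
for every `r > r̃`. -/
theorem high_powers_of_pairwise_independent_forms_are_independent
    (d k s : ℕ) (hd : 0 < d) (hk : 0 < k) (hs : 0 < s) :
    ∃ rt : ℕ, ∀ p : Fin k → MvPolynomial (Fin d) ℝ,
      (∀ i, p i ≠ 0) →
      (∀ i, (p i).IsHomogeneous s) →
      (∀ i j, i ≠ j → ∀ c : ℝ, p i ≠ c • p j) →
      ∀ r : ℕ, rt < r → LinearIndependent ℝ (fun i => (p i) ^ r) := by
  exact ⟨2 ^ (k + 1) * s + k, fun p hp0 hps hp r hr =>
    high_powers_of_pairwise_independent_forms_are_independent_general hp0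
      (fun i => (hps i).totalDegree_le) hp (by rwa [Fintype.card_fin])⟩
end

section
/- Fix an activation degree r ≥ 1 and an architecture d = (d_0, d_1, …, d_h) of positive integers with h ≥ 2. Let W_j ∈ ℝ^{d_j × d_{j−1}} (j = 1, …, h) be weights, and for each i = 1, …, h−1 let D_i ∈ ℝ^{d_i × d_i} be an invertible diagonal matrix and P_i ∈ ℝ^{d_i × d_i} a permutation matrix. Define new weights W_1' = P_1 D_1 W_1, W_j' = P_j D_j W_j D_{j−1}^{−r} P_{j−1}^T for 2 ≤ j ≤ h−1, and W_h' = W_h D_{h−1}^{−r} P_{h−1}^T, where D^{−r} denotes the diagonal matrix whose entries are the (−r)-th powers of the diagonal entries of D. Then the two polynomial network maps coincide: W_h ρ_r(W_{h−1} ρ_r(⋯ ρ_r(W_1 x)⋯)) = W_h' ρ_r(W_{h−1}' ρ_r(⋯ ρ_r(W_1' x)⋯)) for all x ∈ ℝ^{d_0}. -/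
/-- The permutation matrix of a permutation `σ` of `Fin m`. -/
def permMat {m : ℕ} (σ : Equiv.Perm (Fin m)) : Matrix (Fin m) (Fin m) ℝ :=
  Matrix.of fun a b => if a = σ b then 1 else 0

/-!
Both halves of a reparametrization cancel through the activation: for a permutation matrix `P`
and an invertible diagonal matrix `D`, the power `ρ_r (P D v) = P D^r ρ_r v` is brought back to
`ρ_r v` by `D^{-r} Pᵀ`. By induction on the depth, each hidden layer of the new network is
therefore `P D` times the corresponding layer of the old one, and the output layer is unchanged.
-/

open scoped Matrix

theorem permMat_mulVec {m : ℕ} (σ : Equiv.Perm (Fin m)) (v : Fin m → ℝ) :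
    permMat σ *ᵥ v = v ∘ σ.symm := by
  ext i
  simp [permMat, Matrix.mulVec, dotProduct, ← Equiv.symm_apply_eq]

theorem permMat_transpose_mulVec {m : ℕ} (σ : Equiv.Perm (Fin m)) (v : Fin m → ℝ) :
    (permMat σ)ᵀ *ᵥ v = v ∘ σ := by
  ext i
  simp [permMat, Matrix.mulVec, dotProduct]

theorem diagonal_zpow_neg_mul_permMat_transpose_mulVec_pow {m : ℕ} (r : ℕ) {δ : Fin m → ℝ}
    (hδ : ∀ k, δ k ≠ 0) (σ : Equiv.Perm (Fin m)) (v : Fin m → ℝ) :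
    (Matrix.diagonal (fun k => δ k ^ (-(r : ℤ))) * (permMat σ)ᵀ) *ᵥ
      ((permMat σ * Matrix.diagonal δ) *ᵥ v) ^ r = v ^ r := by
  rw [← Matrix.mulVec_mulVec, ← Matrix.mulVec_mulVec, permMat_mulVec, permMat_transpose_mulVec]
  ext k
  simp only [Matrix.mulVec_diagonal, Function.comp_apply, Pi.pow_apply, Equiv.symm_apply_apply]
  rw [mul_pow, zpow_neg, zpow_natCast, inv_mul_cancel_left₀ (pow_ne_zero r (hδ k))]

/-- The network map `x ↦ W_h ρ_r(W_{h-1} ρ_r(⋯ ρ_r(W_1 x)⋯))` as a function between real vector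
spaces, obtained by evaluating the polynomials `net`. On vectors, `ρ_r` is the power `v ^ r`. -/
noncomputable def netMap (r : ℕ) (d : ℕ → ℕ)
    (W : ∀ j : ℕ, Matrix (Fin (d (j + 1))) (Fin (d j)) ℝ) (h : ℕ) (x : Fin (d 0) → ℝ) :
    Fin (d h) → ℝ :=
  fun i => MvPolynomial.eval x (net r d W h i)

section Layers

variable {r : ℕ} {d : ℕ → ℕ} {V W : ∀ j : ℕ, Matrix (Fin (d (j + 1))) (Fin (d j)) ℝ}
  {x : Fin (d 0) → ℝ}

theorem netMap_one : netMap r d W 1 x = W 0 *ᵥ x := by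
  ext i
  simp [netMap, net, Matrix.mulVec, dotProduct]

theorem netMap_add_two (n : ℕ) :
    netMap r d W (n + 2) x = W (n + 1) *ᵥ netMap r d W (n + 1) x ^ r := by
  ext i
  simp only [netMap]
  rw [net]
  simp [netMap, Matrix.mulVec, dotProduct]

theorem netMap_succ_eq_mulVec {M N : ∀ j : ℕ, Matrix (Fin (d (j + 1))) (Fin (d (j + 1))) ℝ}
    {n : ℕ} (hMN : ∀ j < n, ∀ v, N j *ᵥ (M j *ᵥ v) ^ r = v ^ r)
    (h_first : V 0 = M 0 * W 0)
    (h_succ : ∀ j < n, V (j + 1) = M (j + 1) * W (j + 1) * N j) :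
    netMap r d V (n + 1) x = M n *ᵥ netMap r d W (n + 1) x := by
  induction n with
  | zero => rw [netMap_one, netMap_one, h_first, Matrix.mulVec_mulVec]
  | succ n ih =>
    have ih_layer : netMap r d V (n + 1) x = M n *ᵥ netMap r d W (n + 1) x :=
      ih (fun j hj => hMN j (hj.trans n.lt_succ_self))
        (fun j hj => h_succ j (hj.trans n.lt_succ_self))
    calc netMap r d V (n + 2) x
        = (M (n + 1) * W (n + 1) * N n) *ᵥ (M n *ᵥ netMap r d W (n + 1) x) ^ r := by
          rw [netMap_add_two, ih_layer, h_succ n n.lt_succ_self]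
      _ = (M (n + 1) * W (n + 1)) *ᵥ netMap r d W (n + 1) x ^ r := by
          rw [← Matrix.mulVec_mulVec, hMN n n.lt_succ_self]
      _ = M (n + 1) *ᵥ netMap r d W (n + 2) x := by
          rw [netMap_add_two, Matrix.mulVec_mulVec]

end Layers

/-- Multi-homogeneity: replacing the weights
`W_1 ← P_1 D_1 W_1`, `W_j ← P_j D_j W_j D_{j-1}^{-r} P_{j-1}ᵀ` (`2 ≤ j ≤ h-1`),
`W_h ← W_h D_{h-1}^{-r} P_{h-1}ᵀ`, where `D_i` is an invertible diagonal matrix (with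
diagonal entries `δ i`) and `P_i` a permutation matrix, leaves the network map unchanged.
(Here `W j`, `δ (j+1)`, `σ (j+1)` correspond to the paper's `W_{j+1}`, `D_{j+1}`,
`P_{j+1}`.) -/
theorem multi_homogeneity
    (r h : ℕ) (hr : 1 ≤ r) (hh : 2 ≤ h) (d : ℕ → ℕ) (hd : ∀ j, 0 < d j)
    (W : ∀ j : ℕ, Matrix (Fin (d (j + 1))) (Fin (d j)) ℝ)
    (δ : ∀ i : ℕ, Fin (d i) → ℝ) (hδ : ∀ i, 1 ≤ i → i ≤ h - 1 → ∀ k, δ i k ≠ 0)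
    (σ : ∀ i : ℕ, Equiv.Perm (Fin (d i))) :
    ∀ x : Fin (d 0) → ℝ,
      (fun i : Fin (d h) => MvPolynomial.eval x (net r d
        (fun j : ℕ =>
          if j = 0 then
            permMat (σ (j + 1)) * Matrix.diagonal (δ (j + 1)) * W j
          else if j + 1 = h then
            W j * Matrix.diagonal (fun k => δ j k ^ (-(r : ℤ))) * (permMat (σ j)).transpose
          else
            permMat (σ (j + 1)) * Matrix.diagonal (δ (j + 1)) * W j *
              Matrix.diagonal (fun k => δ j k ^ (-(r : ℤ))) * (permMat (σ j)).transpose)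
        h i))
      = fun i : Fin (d h) => MvPolynomial.eval x (net r d W h i) := by
  intro x
  obtain ⟨m, rfl⟩ := Nat.exists_eq_add_of_le' hh
  -- Taking the output transformation to be `1` lets the last layer obey the hidden-layer rule.
  let M (j : ℕ) : Matrix (Fin (d (j + 1))) (Fin (d (j + 1))) ℝ :=
    if j + 1 = m + 2 then 1 else permMat (σ (j + 1)) * Matrix.diagonal (δ (j + 1))
  let N (j : ℕ) : Matrix (Fin (d (j + 1))) (Fin (d (j + 1))) ℝ :=
    Matrix.diagonal (fun k => δ (j + 1) k ^ (-(r : ℤ))) * (permMat (σ (j + 1)))ᵀ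
  have hM_hidden : ∀ j < m + 1, M j = permMat (σ (j + 1)) * Matrix.diagonal (δ (j + 1)) :=
    fun j hj => if_neg (by omega)
  have hM_output : M (m + 1) = 1 := if_pos rfl
  have hMN : ∀ j < m + 1, ∀ v, N j *ᵥ (M j *ᵥ v) ^ r = v ^ r := fun j hj v => by
    rw [hM_hidden j hj]
    exact diagonal_zpow_neg_mul_permMat_transpose_mulVec_pow r
      (hδ (j + 1) (by omega) (by omega)) (σ (j + 1)) v
  change netMap r d _ (m + 2) x = netMap r d W (m + 2) x
  rw [netMap_succ_eq_mulVec hMN ?first ?succ, hM_output, Matrix.one_mulVec]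
  case first => rw [if_pos rfl, hM_hidden 0 m.succ_pos]
  case succ =>
    intro j _
    by_cases hj : j + 1 + 1 = m + 2
    · simp only [M, N, if_neg j.succ_ne_zero, if_pos hj, Matrix.one_mul, Matrix.mul_assoc]
    · simp only [M, N, if_neg j.succ_ne_zero, if_neg hj, Matrix.mul_assoc]
end

section
/- Let P : ℝ^m → ℝ^N be a map whose N coordinate functions are polynomials in m variables with real coefficients, and let Jac P(θ) ∈ ℝ^{N × m} denote the Jacobian matrix of partial derivatives of these polynomials evaluated at θ. Suppose there exists θ₀ ∈ ℝ^m such that Jac P(θ₀) has rank N (i.e., is surjective as a linear map). Then every polynomial q in N variables with real coefficients that vanishes on the image of P (i.e., q(P(θ)) = 0 for all θ ∈ ℝ^m) is the zero polynomial; in other words, the Zariski closure of the image of P is all of ℝ^N. -/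
/-!
Let `J` be the Jacobian of `p` at `x` and let `J * B = 1`. Restricting `p` to the affine subspace
`t ↦ x + B t` gives, by Taylor expansion, a polynomial map `p(x) + t + O(t²)` from affine space to
itself. Up to the translation by `p(x)`, composing with it preserves the lowest-degree homogeneous
part of every polynomial, so no nonzero polynomial can vanish on the image. This argument never
divides and hence works over any commutative ring.
-/

open MvPolynomial

section Filtration

variable {A : Type*} [CommRing A] {I : Ideal A} {φ : A →+* A}

theorem map_sub_mem_pow_succ (hφ : ∀ a, φ a - a ∈ I ^ 2) {n : ℕ} {a : A} (ha : a ∈ I ^ n) :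
    φ a - a ∈ I ^ (n + 1) := by
  induction n generalizing a with
  | zero => exact Ideal.pow_le_pow_right one_le_two (hφ a)
  | succ n ih =>
    rw [pow_succ] at ha
    induction ha using Submodule.mul_induction_on' with
    | mem_mul_mem b hb c hc =>
      have hφc : φ c ∈ I := by
        simpa using I.add_mem (Ideal.pow_le_self two_ne_zero (hφ c)) hc
      have hleft : (φ b - b) * φ c ∈ I ^ (n + 1 + 1) := by
        rw [pow_succ _ (n + 1)]
        exact Ideal.mul_mem_mul (ih hb) hφc
      have hright : b * (φ c - c) ∈ I ^ (n + 1 + 1) := by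
        rw [add_assoc, pow_add]
        exact Ideal.mul_mem_mul hb (hφ c)
      rw [map_mul, show φ b * φ c - b * c = (φ b - b) * φ c + b * (φ c - c) by ring]
      exact add_mem hleft hright
    | add b _ c _ hb hc =>
      rw [map_add, add_sub_add_comm]
      exact add_mem hb hc

theorem injective_of_map_sub_mem_sq [IsHausdorff I A] (hφ : ∀ a, φ a - a ∈ I ^ 2) :
    Function.Injective φ := by
  refine (injective_iff_map_eq_zero φ).2 fun a ha => ?_
  have hmem (n : ℕ) : a ∈ I ^ n := by
    induction n with
    | zero => simp
    | succ n ih => simpa [ha] using map_sub_mem_pow_succ hφ ih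
  refine IsHausdorff.haus ‹IsHausdorff I A› a fun n => ?_
  simpa [SModEq.zero] using hmem n

end Filtration

section Taylor

variable {R A τ : Type*} [CommRing R] [CommRing A] [Algebra R A] {I : Ideal A} {f g : τ → A}

theorem aeval_sub_aeval_mem (hfg : ∀ j, f j - g j ∈ I) (p : MvPolynomial τ R) :
    aeval f p - aeval g p ∈ I := by
  have hcomp : (Ideal.Quotient.mkₐ R I).comp (aeval f) =
      (Ideal.Quotient.mkₐ R I).comp (aeval g) :=
    algHom_ext fun j => by simpa using Ideal.Quotient.eq.2 (hfg j)
  exact Ideal.Quotient.eq.1 (DFunLike.congr_fun hcomp p)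

theorem aeval_sub_aeval_sub_sum_pderiv_mem_sq [Fintype τ] (hfg : ∀ j, f j - g j ∈ I)
    (p : MvPolynomial τ R) :
    aeval f p - aeval g p - ∑ j, aeval g (pderiv j p) * (f j - g j) ∈ I ^ 2 := by
  classical
  induction p using MvPolynomial.induction_on with
  | C r => simp
  | add p q hp hq =>
    convert add_mem hp hq using 1
    simp only [map_add, add_mul, Finset.sum_add_distrib]
    ring
  | mul_X p k hp =>
    have hsum : ∑ j, aeval g (pderiv j (p * X k)) * (f j - g j) =
        (∑ j, aeval g (pderiv j p) * (f j - g j)) * g k + aeval g p * (f k - g k) := by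
      simp only [pderiv_mul, pderiv_X, map_add, map_mul, aeval_X, add_mul,
        Finset.sum_add_distrib, Finset.sum_mul]
      congr 1
      · exact Finset.sum_congr rfl fun j _ => mul_right_comm _ _ _
      · simp [Pi.single_apply, apply_ite (aeval g)]
    have hsq : (aeval f p - aeval g p) * (f k - g k) ∈ I ^ 2 :=
      pow_two I ▸ Ideal.mul_mem_mul (aeval_sub_aeval_mem hfg p) (hfg k)
    convert add_mem (Ideal.mul_mem_right (g k) _ hp) hsq using 1
    rw [hsum, map_mul, map_mul, aeval_X, aeval_X]
    ring

end Taylor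

section AlgebraicIndependence

variable {R A σ : Type*} [CommRing R] [CommRing A] [Algebra R A]

theorem isHausdorff_idealOfVars : IsHausdorff (idealOfVars σ R) (MvPolynomial σ R) where
  haus' q hq := by
    ext s
    have hmem : q ∈ idealOfVars σ R ^ (s.degree + 1) := by
      simpa [SModEq.zero] using hq (s.degree + 1)
    exact (mem_pow_idealOfVars_iff' _ q).1 hmem s (Nat.lt_succ_self _)

theorem algebraicIndependent_of_sub_X_mem_sq {f : σ → MvPolynomial σ R}
    (hf : ∀ i, f i - X i ∈ idealOfVars σ R ^ 2) : AlgebraicIndependent R f := by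
  have := isHausdorff_idealOfVars (R := R) (σ := σ)
  refine injective_of_map_sub_mem_sq (I := idealOfVars σ R) (φ := (aeval f).toRingHom) fun q => ?_
  simpa using aeval_sub_aeval_mem hf q

theorem algebraicIndependent_add_algebraMap {f : σ → A} (hf : AlgebraicIndependent R f)
    (c : σ → R) : AlgebraicIndependent R fun i => f i + algebraMap R A (c i) := by
  have hX : AlgebraicIndependent R fun i => (X i + C (c i) : MvPolynomial σ R) := by
    refine AlgebraicIndependent.of_aeval (x := fun i => X i - C (c i)) ?_
    simpa [algebraMap_eq] using algebraicIndependent_X σ R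
  simpa [aeval_C] using hf.aeval_of_algebraicIndependent hX

end AlgebraicIndependence

section Jacobian

variable {R σ τ : Type*} [CommRing R]

/-- The Jacobian matrix at the point `x` of the polynomial map with coordinates `p i`: rows are
indexed by the coordinates and columns by the variables. -/
noncomputable def jacobianAt (p : σ → MvPolynomial τ R) (x : τ → R) : Matrix σ τ R :=
  Matrix.of fun i j => eval x (pderiv j (p i))

/-- The parametrization `t ↦ x + B t` of an affine subspace, as a point with coordinates in the
polynomial ring in the parameters `t`. -/
noncomputable def affineParam [Fintype σ] (x : τ → R) (B : Matrix τ σ R) :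
    τ → MvPolynomial σ R :=
  fun j => C (x j) + ∑ k, C (B j k) * X k

theorem affineParam_sub_C_mem_idealOfVars [Fintype σ] (x : τ → R) (B : Matrix τ σ R) (j : τ) :
    affineParam x B j - C (x j) ∈ idealOfVars σ R := by
  rw [affineParam, add_sub_cancel_left]
  exact sum_mem fun k _ => Ideal.mul_mem_left _ _ (Ideal.subset_span ⟨k, rfl⟩)

variable [Fintype τ] [DecidableEq σ]

theorem aeval_affineParam_sub_C_sub_X_mem_sq [Fintype σ] {p : σ → MvPolynomial τ R} {x : τ → R}
    {B : Matrix τ σ R} (hB : jacobianAt p x * B = 1) (i : σ) :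
    aeval (affineParam x B) (p i) - C (eval x (p i)) - X i ∈ idealOfVars σ R ^ 2 := by
  have haeval (q : MvPolynomial τ R) :
      aeval (fun j => (C (x j) : MvPolynomial σ R)) q = C (eval x q) := by
    simpa only [algebraMap_eq, Function.comp_def, aeval_eq_eval] using
      aeval_algebraMap_apply (MvPolynomial σ R) x q
  have hlinear : ∑ j, C (eval x (pderiv j (p i))) * (affineParam x B j - C (x j)) =
      (X i : MvPolynomial σ R) :=
    calc
      _ = ∑ k, C ((jacobianAt p x * B) i k) * X k := by
        simp only [affineParam, add_sub_cancel_left, Finset.mul_sum, Matrix.mul_apply, map_sum,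
          Finset.sum_mul, jacobianAt, Matrix.of_apply, C_mul, mul_assoc]
        exact Finset.sum_comm
      _ = X i := by simp [hB, Matrix.one_apply]
  simpa only [haeval, hlinear] using
    aeval_sub_aeval_sub_sum_pderiv_mem_sq (affineParam_sub_C_mem_idealOfVars x B) (p i)

theorem algebraicIndependent_of_jacobianAt_mul_eq_one [Finite σ] {p : σ → MvPolynomial τ R}
    {x : τ → R} {B : Matrix τ σ R} (hB : jacobianAt p x * B = 1) : AlgebraicIndependent R p := by
  have := Fintype.ofFinite σ
  refine AlgebraicIndependent.of_comp (aeval (affineParam x B)) ?_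
  have h := algebraicIndependent_add_algebraMap
    (algebraicIndependent_of_sub_X_mem_sq (aeval_affineParam_sub_C_sub_X_mem_sq hB))
    fun i => eval x (p i)
  simpa [algebraMap_eq, Function.comp_def] using h

end Jacobian

section Rank

variable {K σ τ : Type*} [Field K] [Fintype σ] [Fintype τ]

theorem exists_mul_eq_one_of_rank_eq_card [DecidableEq σ] {M : Matrix σ τ K}
    (hM : M.rank = Fintype.card σ) : ∃ B : Matrix τ σ K, M * B = 1 := by
  have hrange : LinearMap.range M.mulVecLin = ⊤ :=
    Submodule.eq_top_of_finrank_eq (by rw [Module.finrank_fintype_fun_eq_card]; exact hM)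
  exact Matrix.mulVec_surjective_iff_exists_right_inverse.1 (LinearMap.range_eq_top.1 hrange)

theorem algebraicIndependent_of_rank_jacobianAt_eq_card {p : σ → MvPolynomial τ K} {x : τ → K}
    (hp : (jacobianAt p x).rank = Fintype.card σ) : AlgebraicIndependent K p := by
  classical
  obtain ⟨B, hB⟩ := exists_mul_eq_one_of_rank_eq_card hp
  exact algebraicIndependent_of_jacobianAt_mul_eq_one hB

end Rank

theorem aeval_eq_zero_of_forall_eval_eq_zero {R σ τ : Type*} [CommRing R] [IsDomain R] [Infinite R]
    {p : σ → MvPolynomial τ R} {q : MvPolynomial σ R}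
    (hq : ∀ θ : τ → R, eval (fun i => eval θ (p i)) q = 0) : aeval p q = 0 := by
  refine MvPolynomial.funext fun θ => ?_
  have hcomp : (aeval θ).comp (aeval p) = aeval fun i => aeval θ (p i) := comp_aeval p (aeval θ)
  simpa [coe_aeval_eq_eval, hq θ] using DFunLike.congr_fun hcomp q

theorem full_rank_jacobian_implies_dominant_general {K σ τ : Type*} [Field K] [Infinite K]
    [Fintype σ] [Fintype τ] (p : σ → MvPolynomial τ K)
    (hjac : ∃ θ₀ : τ → K, (jacobianAt p θ₀).rank = Fintype.card σ) (q : MvPolynomial σ K)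
    (hq : ∀ θ : τ → K, eval (fun i => eval θ (p i)) q = 0) : q = 0 := by
  obtain ⟨θ₀, hrank⟩ := hjac
  have hp : AlgebraicIndependent K p := algebraicIndependent_of_rank_jacobianAt_eq_card hrank
  exact hp.eq_zero_of_aeval_eq_zero q (aeval_eq_zero_of_forall_eval_eq_zero hq)

/-- let `P : ℝᵐ → ℝᴺ` be a polynomial map (coordinates `p i`). If its
Jacobian matrix has rank `N` (is surjective) at some point `θ₀`, then every polynomial `q`
in `N` variables vanishing on the image of `P` is the zero polynomial; i.e. the Zariski
closure of the image of `P` is all of `ℝᴺ`. -/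
theorem full_rank_jacobian_implies_dominant
    (m N : ℕ) (p : Fin N → MvPolynomial (Fin m) ℝ)
    (hjac : ∃ θ₀ : Fin m → ℝ,
      (Matrix.of fun (i : Fin N) (j : Fin m) =>
        MvPolynomial.eval θ₀ (MvPolynomial.pderiv j (p i))).rank = N) :
    ∀ q : MvPolynomial (Fin N) ℝ,
      (∀ θ : Fin m → ℝ, MvPolynomial.eval (fun i => MvPolynomial.eval θ (p i)) q = 0) →
      q = 0 :=
  full_rank_jacobian_implies_dominant_general p (by simpa [jacobianAt] using hjac)
end

section
/- Let d ≥ 2 and s ≥ 2 be integers, and let p_1, …, p_{2d−2} ∈ ℝ[x_1, …, x_d] be homogeneous polynomials, all of degree s. For D ∈ ℕ, let H(D) denote the dimension over ℝ of the linear span of the set of products { p_1^{a_1} ⋯ p_{2d−2}^{a_{2d−2}} : a_1 + ⋯ + a_{2d−2} = D } (the degree-D graded piece of the subalgebra ℝ[p_1, …, p_{2d−2}]), and let V(D) = C(d + Ds − 1, Ds) be the dimension of the space of homogeneous polynomials of degree Ds in d variables (the degree-D graded piece of the Veronese algebra V_{d,s}). Then V(D) − H(D) tends to +∞ as D → ∞;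 i.e., the Hilbert polynomials of ℝ[p_1, …, p_{2d−2}] and of V_{d,s} have non-constant difference. -/
/-!
If the projective map defined by forms `p` of degree `s` is undefined at a point, every product of
the `p i` vanishes there to high order, which costs unboundedly many dimensions. If instead it fails
to be injective or immersive at infinitely many points, each of them contributes an independent
linear relation satisfied by the products, and again the codimension is unbounded.

A dimension count produces one pair `x, v` with `D_v p(x) = 0`: there are at most `2d - 2`
equations, bihomogeneous in `2d` unknowns. The secants of the map, completed by their tangent
limits, satisfy fewer equations than they have parameters, so this pair lies in a positive
dimensional family, which yields infinitely many degenerate points unless the family keeps the point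
`x` fixed and only moves the direction. To exclude this, `p` is perturbed to `p + t q` with `t`
transcendental, which makes the kernel of the Jacobian matrix at `x` one-dimensional; by
specialisation at `t = 0`, the perturbation does not decrease the dimensions of the spans.
-/

open MvPolynomial
open scoped Matrix

section Specialization

theorem exists_linearIndependent_columns {K β τ : Type*} [Field K] [Finite β] {v : β → τ → K}
    (hv : LinearIndependent K v) :
    ∃ e : β → τ, LinearIndependent K fun j i => v i (e j) := by
  classical
  have := Fintype.ofFinite β
  have hspan : Submodule.span K (Set.range fun j i => v i j) = ⊤ := by
    by_contra hne
    obtain ⟨f, hf, hker⟩ := Submodule.exists_le_ker_of_lt_top _ (lt_top_iff_ne_top.2 hne)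
    refine hf (LinearMap.pi_ext' fun i => LinearMap.ext_ring ?_)
    refine Fintype.linearIndependent_iff.1 hv (fun i => f (Pi.single i 1)) (funext fun j => ?_) i
    have hj : f (fun i => v i j) = 0 := hker (Submodule.subset_span ⟨j, rfl⟩)
    rw [pi_eq_sum_univ' fun i => v i j] at hj
    simpa [mul_comm, ← Pi.single_apply] using hj
  obtain ⟨f, hf, -, hli⟩ := Submodule.exists_fun_fin_finrank_span_eq K (Set.range fun j i => v i j)
  choose e he using hf
  obtain rfl : (fun l i => v i (e l)) = f := funext he
  have hcard :
      Fintype.card β = Module.finrank K (Submodule.span K (Set.range fun j i => v i j)) := by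
    rw [hspan, finrank_top, Module.finrank_fintype_fun_eq_card]
  let r := Fintype.equivFinOfCardEq hcard
  exact ⟨e ∘ r, hli.comp r r.injective⟩

theorem linearIndependent_of_specialization {A F K β τ : Type*} [CommRing A] [Field F] [Field K]
    [Finite β] (φ : A →+* F) {ψ : A →+* K} (hψ : Function.Injective ψ) {v : β → τ → A}
    (hv : LinearIndependent F fun i j => φ (v i j)) :
    LinearIndependent K fun i j => ψ (v i j) := by
  classical
  have := Fintype.ofFinite β
  obtain ⟨e, he⟩ := exists_linearIndependent_columns hv
  let M : Matrix β β A := fun i j => v i (e j)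
  have hdet : M.det ≠ 0 := fun h => by
    have hunit : IsUnit (φ.mapMatrix M) :=
      Matrix.linearIndependent_cols_iff_isUnit.1 he
    rw [Matrix.isUnit_iff_isUnit_det, ← RingHom.map_det, h, map_zero] at hunit
    exact not_isUnit_zero hunit
  have hrows : LinearIndependent K (ψ.mapMatrix M).row := by
    refine Matrix.linearIndependent_rows_of_det_ne_zero (A := ψ.mapMatrix M) ?_
    rwa [← RingHom.map_det, map_ne_zero_iff ψ hψ]
  exact LinearIndependent.of_comp (LinearMap.funLeft K K e) hrows

theorem linearIndependent_coeff_iff {K β σ : Type*} [Field K] {f : β → MvPolynomial σ K} :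
    LinearIndependent K (fun j m => coeff m (f j)) ↔ LinearIndependent K f :=
  (LinearMap.pi fun m : σ →₀ ℕ => lcoeff K m).linearIndependent_iff <|
    LinearMap.ker_eq_bot.2 fun p q h => MvPolynomial.ext p q (congrFun h)

theorem linearIndependent_map_of_specialization {A F K β σ : Type*} [CommRing A] [Field F] [Field K]
    [Finite β] (φ : A →+* F) {ψ : A →+* K} (hψ : Function.Injective ψ) {f : β → MvPolynomial σ A}
    (hf : LinearIndependent F fun j => map φ (f j)) : LinearIndependent K fun j => map ψ (f j) := by
  rw [← linearIndependent_coeff_iff] at hf ⊢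
  simp only [coeff_map] at hf ⊢
  exact linearIndependent_of_specialization φ hψ hf

end Specialization

section ProductSpan

variable {σ ι : Type*} [Fintype ι] {k : Type*} [Field k]

/-- The degree-`D` piece of the algebra generated by the family `p`: the span of the products of
`D` members of the family. -/
noncomputable def productSpan (p : ι → MvPolynomial σ k) (D : ℕ) : Submodule k (MvPolynomial σ k) :=
  Submodule.span k {q | ∃ a : ι → ℕ, (∑ i, a i) = D ∧ q = ∏ i, p i ^ a i}

instance finite_productSpan (p : ι → MvPolynomial σ k) (D : ℕ) :
    Module.Finite k (productSpan p D) := by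
  classical
  refine FiniteDimensional.span_of_finite k (((Finset.univ.piAntidiag D).image
    fun a : ι → ℕ => ∏ i, p i ^ a i).finite_toSet.subset ?_)
  rintro _ ⟨a, rfl, rfl⟩
  simpa using ⟨a, rfl, rfl⟩

theorem productSpan_le_homogeneousSubmodule {p : ι → MvPolynomial σ k} {s : ℕ}
    (hp : ∀ i, (p i).IsHomogeneous s) (D : ℕ) :
    productSpan p D ≤ homogeneousSubmodule σ k (D * s) := by
  refine Submodule.span_le.2 ?_
  rintro _ ⟨a, rfl, rfl⟩
  rw [SetLike.mem_coe, mem_homogeneousSubmodule, Finset.sum_mul]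
  exact IsHomogeneous.prod _ _ _ fun i _ => by simpa [mul_comm] using (hp i).pow (a i)

theorem eval_eq_of_mem_productSpan {p : ι → MvPolynomial σ k} {b b' : σ → k} {a : k}
    (h : ∀ i, eval b (p i) = a * eval b' (p i)) {D : ℕ} {q : MvPolynomial σ k}
    (hq : q ∈ productSpan p D) : eval b q = a ^ D * eval b' q := by
  induction hq using Submodule.span_induction with
  | mem _ hq =>
    obtain ⟨e, rfl, rfl⟩ := hq
    simp [h, mul_pow, Finset.prod_mul_distrib, Finset.prod_pow_eq_pow_sum]
  | zero => simp
  | add f g _ _ hf hg => rw [map_add, map_add, hf, hg, mul_add]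
  | smul r f _ hf => rw [smul_eval, smul_eval, hf, mul_left_comm]

theorem finrank_productSpan_map_le_of_injective {A F K : Type*} [CommRing A] [Field F] [Field K]
    (φ : A →+* F) {ψ : A →+* K} (hψ : Function.Injective ψ) (P : ι → MvPolynomial σ A) (D : ℕ) :
    Module.finrank F (productSpan (fun i => map φ (P i)) D) ≤
      Module.finrank K (productSpan (fun i => map ψ (P i)) D) := by
  have hfin := finite_productSpan (fun i => map φ (P i)) D
  rw [productSpan] at hfin ⊢
  obtain ⟨f, hf, -, hli⟩ := Submodule.exists_fun_fin_finrank_span_eq F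
    {q | ∃ a : ι → ℕ, (∑ i, a i) = D ∧ q = ∏ i, map φ (P i) ^ a i}
  choose a ha hfa using hf
  have hK : LinearIndependent K fun j => map ψ (∏ i, P i ^ a j i) := by
    refine linearIndependent_map_of_specialization φ hψ ?_
    simpa only [map_prod, map_pow, ← hfa] using hli
  rw [← Fintype.card_fin (Module.finrank F _), ← finrank_span_eq_card hK]
  refine Submodule.finrank_mono (Submodule.span_le.2 ?_)
  rintro _ ⟨j, rfl⟩
  exact Submodule.subset_span ⟨a j, ha j, by simp⟩

end ProductSpan

section Gap

variable {σ ι : Type*} [Fintype ι] {k : Type*} [Field k]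

instance finite_homogeneousSubmodule [Finite σ] (m : ℕ) :
    Module.Finite k (homogeneousSubmodule σ k m) :=
  Module.Finite.iff_fg.2 (weightedHomogeneousSubmodule_fg _ _ (by simp) m)

theorem finrank_homogeneousSubmodule [Fintype σ] (m : ℕ) :
    Module.finrank k (homogeneousSubmodule σ k m) = (Fintype.card σ + m - 1).choose m := by
  classical
  have hset : {c : σ →₀ ℕ | c.degree = m} = (Finset.univ.finsuppAntidiag m : Finset (σ →₀ ℕ)) := by
    ext c
    simp [Finsupp.degree_eq_sum]
  rw [homogeneousSubmodule_eq_finsupp_supported, hset]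
  refine (Module.finrank_eq_card_basis (basisRestrictSupport k _)).trans ?_
  simp [Finset.card_finsuppAntidiag_nat_eq_choose]

/-- The codimension of the degree-`D` piece of the algebra generated by `p` in the space of all
forms of degree `D * s` tends to infinity with `D`. The bound is stated additively to avoid
truncated subtraction. -/
def HasUnboundedGap (p : ι → MvPolynomial σ k) (s : ℕ) : Prop :=
  ∀ N : ℕ, ∀ᶠ D in Filter.atTop,
    Module.finrank k (productSpan p D) + N ≤ Module.finrank k (homogeneousSubmodule σ k (D * s))

theorem HasUnboundedGap.of_finrank_le [Finite σ] {K κ : Type*} [Field K] [Fintype κ]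
    {p : ι → MvPolynomial σ k} {r : κ → MvPolynomial σ K} {s : ℕ} (hr : HasUnboundedGap r s)
    (h : ∀ D, Module.finrank k (productSpan p D) ≤ Module.finrank K (productSpan r D)) :
    HasUnboundedGap p s := fun N => (hr N).mono fun D hD => by
  have := Fintype.ofFinite σ
  rw [finrank_homogeneousSubmodule] at hD ⊢
  exact (Nat.add_le_add_right (h D) N).trans hD

theorem HasUnboundedGap.of_map [Finite σ] {K : Type*} [Field K] [Algebra k K]
    {p : ι → MvPolynomial σ k} {s : ℕ}
    (h : HasUnboundedGap (fun i => map (algebraMap k K) (p i)) s) : HasUnboundedGap p s :=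
  h.of_finrank_le fun D => by
    have hle :=
      finrank_productSpan_map_le_of_injective (RingHom.id k) (algebraMap k K).injective p D
    rwa [show (fun i => map (RingHom.id k) (p i)) = p from funext fun i => map_id (p i)] at hle

theorem HasUnboundedGap.tendsto_sub [Fintype σ] {p : ι → MvPolynomial σ k} {s : ℕ}
    (h : HasUnboundedGap p s) :
    Filter.Tendsto
      (fun D : ℕ => ((Fintype.card σ + D * s - 1).choose (D * s) : ℤ) -
        Module.finrank k (productSpan p D)) Filter.atTop Filter.atTop := by
  refine Filter.tendsto_atTop.2 fun N => (h N.toNat).mono fun D hD => ?_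
  rw [finrank_homogeneousSubmodule] at hD
  have := Int.self_le_toNat N
  omega

end Gap

section DirectionalDerivative

variable {σ R : Type*} [Fintype σ] [CommRing R]

/-- The derivative of a polynomial at the point `b` in the direction `v`, as a linear functional
on polynomials. -/
noncomputable def dirDeriv (v b : σ → R) : MvPolynomial σ R →ₗ[R] R :=
  ∑ j, v j • (aeval b : MvPolynomial σ R →ₐ[R] R).toLinearMap ∘ₗ (pderiv j).toLinearMap

theorem dirDeriv_apply (v b : σ → R) (g : MvPolynomial σ R) :
    dirDeriv v b g = ∑ j, v j * eval b (pderiv j g) := by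
  simp [dirDeriv, aeval_eq_eval]

theorem dirDeriv_add_left (v w b : σ → R) (g : MvPolynomial σ R) :
    dirDeriv (v + w) b g = dirDeriv v b g + dirDeriv w b g := by
  simp [dirDeriv_apply, add_mul, Finset.sum_add_distrib]

theorem dirDeriv_smul_left (c : R) (v b : σ → R) (g : MvPolynomial σ R) :
    dirDeriv (c • v) b g = c * dirDeriv v b g := by
  simp [dirDeriv_apply, Finset.mul_sum, mul_assoc]

theorem dirDeriv_mul (v b : σ → R) (g h : MvPolynomial σ R) :
    dirDeriv v b (g * h) = eval b g * dirDeriv v b h + eval b h * dirDeriv v b g := by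
  simp only [dirDeriv_apply, Derivation.leibniz, smul_eq_mul, map_add, map_mul, Finset.mul_sum,
    ← Finset.sum_add_distrib]
  exact Finset.sum_congr rfl fun j _ => by ring

@[simp]
theorem dirDeriv_one (v b : σ → R) : dirDeriv v b 1 = 0 := by
  simp [dirDeriv_apply]

@[simp]
theorem dirDeriv_C (v b : σ → R) (a : R) : dirDeriv v b (C a) = 0 := by
  simp [dirDeriv_apply]

@[simp]
theorem dirDeriv_X (v b : σ → R) (j : σ) : dirDeriv v b (X j) = v j := by
  classical
  simp [dirDeriv_apply, pderiv_X, Pi.single_apply, apply_ite]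

theorem dirDeriv_C_mul (v b : σ → R) (c : R) (g : MvPolynomial σ R) :
    dirDeriv v b (C c * g) = c * dirDeriv v b g := by
  rw [← smul_eq_C_mul, map_smul, smul_eq_mul]

theorem dirDeriv_pow (v b : σ → R) (g : MvPolynomial σ R) (m : ℕ) :
    dirDeriv v b (g ^ m) = m * eval b g ^ (m - 1) * dirDeriv v b g := by
  simp only [dirDeriv_apply, Derivation.leibniz_pow, smul_eq_mul, nsmul_eq_mul, map_mul, map_pow,
    map_natCast, Finset.mul_sum]
  exact Finset.sum_congr rfl fun j _ => by ring

/-- Euler's identity. -/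
theorem dirDeriv_self {g : MvPolynomial σ R} {s : ℕ} (hg : g.IsHomogeneous s) (b : σ → R) :
    dirDeriv b b g = s * eval b g := by
  have := congrArg (eval b) hg.sum_X_mul_pderiv
  simpa [dirDeriv_apply] using this

end DirectionalDerivative

section LinearForm

variable {σ R : Type*} [Fintype σ] [CommRing R]

/-- The linear form with coefficient vector `c`. -/
noncomputable def linearForm (c : σ → R) : MvPolynomial σ R :=
  ∑ j, C (c j) * X j

theorem isHomogeneous_linearForm (c : σ → R) : (linearForm c).IsHomogeneous 1 :=
  IsHomogeneous.sum _ _ _ fun _ _ => isHomogeneous_C_mul_X _ _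

@[simp]
theorem eval_linearForm (c x : σ → R) : eval x (linearForm c) = c ⬝ᵥ x := by
  simp [linearForm, dotProduct]

@[simp]
theorem dirDeriv_linearForm (c v b : σ → R) : dirDeriv v b (linearForm c) = c ⬝ᵥ v := by
  simp [linearForm, dotProduct, dirDeriv_C_mul]

end LinearForm

section DegeneratePoints

variable {σ ι k : Type*} [Fintype σ] [Fintype ι] [Field k]

/-- The ideal of the polynomials that vanish, together with all their first derivatives, at every
point of `F`. -/
noncomputable def doubleVanishingIdeal (F : Set (σ → k)) : Ideal (MvPolynomial σ k) where
  carrier := {g | ∀ z ∈ F, eval z g = 0 ∧ ∀ v, dirDeriv v z g = 0}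
  zero_mem' := by simp
  add_mem' hf hg z hz := by simp [hf z hz, hg z hz]
  smul_mem' f g hg z hz := by simp [dirDeriv_mul, hg z hz]

theorem mul_mem_doubleVanishingIdeal_insert {F : Set (σ → k)} {f g : MvPolynomial σ k} {z : σ → k}
    (hf : eval z f = 0) (hg : g ∈ doubleVanishingIdeal F) :
    f ^ 2 * g ∈ doubleVanishingIdeal (insert z F) := by
  rintro y (rfl | hy)
  · simp [pow_two, dirDeriv_mul, hf]
  · exact Ideal.mul_mem_left _ (f ^ 2) hg y hy

/-- The factor separating `b` from `z` is the square of a coordinate difference, homogenised with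
the linear form that equals `1` on the chart. -/
theorem exists_form_mem_doubleVanishingIdeal {c b : σ → k} (hb : c ⬝ᵥ b = 1)
    {F : Finset (σ → k)} (hF : ∀ z ∈ F, c ⬝ᵥ z = 1) (hbF : b ∉ F) {m : ℕ} (hm : 2 * F.card ≤ m) :
    ∃ g ∈ doubleVanishingIdeal (F : Set (σ → k)), g.IsHomogeneous m ∧ eval b g ≠ 0 := by
  classical
  induction F using Finset.induction_on generalizing m with
  | empty =>
    exact ⟨linearForm c ^ m, by simp [doubleVanishingIdeal],
      by simpa using (isHomogeneous_linearForm c).pow m, by simp [hb]⟩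
  | insert z F hz ih =>
    rw [Finset.card_insert_of_notMem hz] at hm
    rw [Finset.mem_insert, not_or] at hbF
    obtain ⟨n, rfl⟩ := Nat.exists_eq_add_of_le' (by omega : 2 ≤ m)
    obtain ⟨g, hgF, hg, hgb⟩ := ih (fun y hy => hF y (Finset.mem_insert_of_mem hy)) hbF.2
      (by omega : 2 * F.card ≤ n)
    obtain ⟨j, hj⟩ := Function.ne_iff.1 hbF.1
    let l : MvPolynomial σ k := X j - C (z j) * linearForm c
    have hl : l.IsHomogeneous 1 := (isHomogeneous_X k j).sub ((isHomogeneous_linearForm c).C_mul _)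
    have hlz : eval z l = 0 := by simp [l, hF z (Finset.mem_insert_self z F)]
    refine ⟨l ^ 2 * g, ?_, ?_, ?_⟩
    · rw [Finset.coe_insert]
      exact mul_mem_doubleVanishingIdeal_insert hlz hgF
    · simpa [add_comm] using (hl.pow 2).mul hg
    · simp [l, hb, sub_eq_zero, hj, hgb]

theorem dirDeriv_mul_of_eq {v b : σ → k} {f g : MvPolynomial σ k} {x y : k}
    (hf : dirDeriv v b f = x * eval b f) (hg : dirDeriv v b g = y * eval b g) :
    dirDeriv v b (f * g) = (x + y) * eval b (f * g) := by
  rw [dirDeriv_mul, hf, hg, map_mul]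
  ring

theorem dirDeriv_prod_of_eq {v b : σ → k} {f : ι → MvPolynomial σ k} {x : ι → k}
    (hf : ∀ i, dirDeriv v b (f i) = x i * eval b (f i)) :
    dirDeriv v b (∏ i, f i) = (∑ i, x i) * eval b (∏ i, f i) := by
  classical
  induction (Finset.univ : Finset ι) using Finset.induction_on with
  | empty => simp
  | insert i t hi ih =>
    rw [Finset.prod_insert hi, Finset.sum_insert hi]
    exact dirDeriv_mul_of_eq (hf i) ih

theorem dirDeriv_eq_of_mem_productSpan {p : ι → MvPolynomial σ k} {v b : σ → k} {a : k}
    (h : ∀ i, dirDeriv v b (p i) = a * eval b (p i)) {D : ℕ} {q : MvPolynomial σ k}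
    (hq : q ∈ productSpan p D) : dirDeriv v b q = D * a * eval b q := by
  induction hq using Submodule.span_induction with
  | mem _ hq =>
    obtain ⟨e, rfl, rfl⟩ := hq
    rw [Nat.cast_sum, Finset.sum_mul]
    refine dirDeriv_prod_of_eq fun i => ?_
    rw [dirDeriv_pow, h, map_pow]
    rcases Nat.eq_zero_or_pos (e i) with hi | hi
    · simp [hi]
    · rw [← pow_sub_one_mul hi.ne' (eval b (p i))]
      ring
  | zero => simp
  | add f g _ _ hf hg => rw [map_add, map_add, hf, hg, mul_add]
  | smul r f _ hf => rw [map_smul, smul_eval, hf, smul_eq_mul, mul_left_comm]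

/-- A point `b` of the affine chart `c ⬝ᵥ z = 1` of projective space at which the projective map
defined by `p` fails to be injective (first alternative) or immersive (second alternative). -/
def IsDegeneratePoint (c : σ → k) (p : ι → MvPolynomial σ k) (b : σ → k) : Prop :=
  c ⬝ᵥ b = 1 ∧
    ((∃ b', b' ≠ b ∧ c ⬝ᵥ b' = 1 ∧ ∃ a, ∀ i, eval b (p i) = a * eval b' (p i)) ∨
      ∃ v, v ≠ 0 ∧ c ⬝ᵥ v = 0 ∧ ∃ a, ∀ i, dirDeriv v b (p i) = a * eval b (p i))

/-- The value at `b`, or the derivative at `b` in the direction `v`, obeys on the products a linear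
relation that fails for forms vanishing doubly at any prescribed other points. -/
theorem IsDegeneratePoint.exists_functional {c b : σ → k} {p : ι → MvPolynomial σ k}
    (hb : IsDegeneratePoint c p b) {F : Finset (σ → k)} (hF : ∀ z ∈ F, c ⬝ᵥ z = 1) (hbF : b ∉ F) :
    ∃ F' : Finset (σ → k), F ⊆ F' ∧ (∀ z ∈ F', c ⬝ᵥ z = 1) ∧ ∀ D m, 2 * F.card + 2 ≤ m →
      ∃ φ : MvPolynomial σ k →ₗ[k] k, (∀ q ∈ productSpan p D, φ q = 0) ∧
        (∀ q ∈ doubleVanishingIdeal (F' : Set (σ → k)), φ q = 0) ∧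
        ∃ g ∈ doubleVanishingIdeal (F : Set (σ → k)), g.IsHomogeneous m ∧ φ g ≠ 0 := by
  classical
  obtain ⟨hcb, ⟨b', hne, hcb', a, ha⟩ | ⟨v, hv, hcv, a, ha⟩⟩ := hb
  · have hF' : ∀ z ∈ insert b' F, c ⬝ᵥ z = 1 := by simpa [hcb'] using hF
    refine ⟨insert b (insert b' F), ?_, by simpa [hcb] using hF', fun D m hm => ?_⟩
    · exact (Finset.subset_insert _ _).trans (Finset.subset_insert _ _)
    obtain ⟨g, hgF, hg, hgb⟩ := exists_form_mem_doubleVanishingIdeal (m := m) hcb hF'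
      (by simpa [hne.symm] using hbF) (by have := Finset.card_insert_le b' F; omega)
    refine ⟨(aeval b).toLinearMap - a ^ D • (aeval b').toLinearMap, fun q hq => ?_, fun q hq => ?_,
      g, fun z hz => hgF z (by simp [Finset.mem_coe.1 hz]), hg, ?_⟩
    · simp [aeval_eq_eval, eval_eq_of_mem_productSpan ha hq]
    · simp [aeval_eq_eval, (hq b (by simp)).1, (hq b' (by simp)).1]
    · simp [aeval_eq_eval, (hgF b' (by simp)).1, hgb]
  · refine ⟨insert b F, Finset.subset_insert _ _, by simpa [hcb] using hF, fun D m hm => ?_⟩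
    obtain ⟨n, rfl⟩ := Nat.exists_eq_add_of_le' (by omega : 1 ≤ m)
    obtain ⟨g, hgF, hg, hgb⟩ := exists_form_mem_doubleVanishingIdeal (m := n) hcb hF hbF (by omega)
    obtain ⟨j, hj⟩ := Function.ne_iff.1 hv
    let l : MvPolynomial σ k := X j - C (b j) * linearForm c
    have hl : l.IsHomogeneous 1 := (isHomogeneous_X k j).sub ((isHomogeneous_linearForm c).C_mul _)
    have hlb : eval b l = 0 := by simp [l, hcb]
    have hlv : dirDeriv v b l = v j := by simp [l, dirDeriv_C_mul, hcv]
    refine ⟨dirDeriv v b - (D * a) • (aeval b).toLinearMap, fun q hq => ?_, fun q hq => ?_,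
      l * g, Ideal.mul_mem_left _ l hgF, by simpa [add_comm] using hl.mul hg, ?_⟩
    · simp [aeval_eq_eval, dirDeriv_eq_of_mem_productSpan ha hq]
    · simp [aeval_eq_eval, hq b (by simp)]
    · simpa [aeval_eq_eval, dirDeriv_mul, hlb, hlv, hgb] using hj

/-- The products together with the forms of degree `m` vanishing doubly at `F`. -/
noncomputable def relaxedProductSpan (p : ι → MvPolynomial σ k) (F : Set (σ → k)) (D m : ℕ) :
    Submodule k (MvPolynomial σ k) :=
  productSpan p D ⊔ homogeneousSubmodule σ k m ⊓ (doubleVanishingIdeal F).restrictScalars k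

theorem IsDegeneratePoint.exists_relaxedProductSpan_lt {c b : σ → k} {p : ι → MvPolynomial σ k}
    (hb : IsDegeneratePoint c p b) {F : Finset (σ → k)} (hF : ∀ z ∈ F, c ⬝ᵥ z = 1) (hbF : b ∉ F) :
    ∃ F' : Finset (σ → k), (∀ z ∈ F', c ⬝ᵥ z = 1) ∧ ∀ D m, 2 * F.card + 2 ≤ m →
      relaxedProductSpan p F' D m < relaxedProductSpan p F D m := by
  obtain ⟨F', hFF', hF', h⟩ := hb.exists_functional hF hbF
  refine ⟨F', hF', fun D m hm => ?_⟩
  obtain ⟨φ, hφp, hφF', g, hgF, hg, hφg⟩ := h D m hm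
  refine lt_of_le_of_ne ?_ fun heq => hφg ?_
  · exact sup_le_sup_left
      (inf_le_inf_left _ fun q hq z hz => hq z (Finset.coe_subset.2 hFF' hz)) _
  · have hker : relaxedProductSpan p F' D m ≤ LinearMap.ker φ :=
      sup_le hφp fun q hq => hφF' q hq.2
    exact hker (heq ▸ Submodule.mem_sup_right ⟨hg, hgF⟩)

theorem hasUnboundedGap_of_infinite_setOf_isDegeneratePoint {c : σ → k} {p : ι → MvPolynomial σ k}
    {s : ℕ} (hs : 0 < s) (hp : ∀ i, (p i).IsHomogeneous s)
    (hinf : {b | IsDegeneratePoint c p b}.Infinite) : HasUnboundedGap p s := by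
  have hle : ∀ F D, relaxedProductSpan p F D (D * s) ≤ homogeneousSubmodule σ k (D * s) :=
    fun F D => sup_le (productSpan_le_homogeneousSubmodule hp D) inf_le_left
  suffices ∀ N, ∃ F : Finset (σ → k), (∀ z ∈ F, c ⬝ᵥ z = 1) ∧ ∀ᶠ D in Filter.atTop,
      Module.finrank k (relaxedProductSpan p F D (D * s)) + N ≤
        Module.finrank k (homogeneousSubmodule σ k (D * s)) by
    intro N
    obtain ⟨F, -, hF⟩ := this N
    refine hF.mono fun D hD => (Nat.add_le_add_right ?_ N).trans hD
    have := Submodule.finiteDimensional_of_le (hle F D)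
    exact Submodule.finrank_mono le_sup_left
  intro N
  induction N with
  | zero =>
    exact ⟨∅, by simp, Filter.Eventually.of_forall fun D => Submodule.finrank_mono (hle _ D)⟩
  | succ N ih =>
    obtain ⟨F, hF, hN⟩ := ih
    obtain ⟨b, hb, hbF⟩ := hinf.exists_notMem_finset F
    obtain ⟨F', hF', hlt⟩ := hb.exists_relaxedProductSpan_lt hF hbF
    refine ⟨F', hF', ?_⟩
    filter_upwards [hN, Filter.eventually_ge_atTop (2 * F.card + 2)] with D hD hDF
    have := Submodule.finiteDimensional_of_le (hle F D)
    have := Submodule.finrank_lt_finrank_of_lt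
      (hlt D (D * s) (hDF.trans (Nat.le_mul_of_pos_right D hs)))
    omega

end DegeneratePoints

section BasePoint

variable {σ ι k : Type*} [Fintype ι] [Field k]

theorem finrank_add_le_of_succ_lt {M : Type*} [AddCommGroup M] [Module k M] {K : ℕ → Submodule k M}
    [Module.Finite k (K 0)] {n : ℕ} (hK : ∀ j < n, K (j + 1) < K j) :
    Module.Finite k (K n) ∧ Module.finrank k (K n) + n ≤ Module.finrank k (K 0) := by
  induction n with
  | zero => exact ⟨inferInstance, le_rfl⟩
  | succ n ih =>
    obtain ⟨_, hn⟩ := ih fun j hj => hK j (hj.trans n.lt_succ_self)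
    have hlt := hK n n.lt_succ_self
    exact ⟨Submodule.finiteDimensional_of_le hlt.le, by
      have := Submodule.finrank_lt_finrank_of_lt hlt
      omega⟩

/-- Restriction of polynomials to the line through `u` with direction `w`, in the parameter that
vanishes at `u`. -/
noncomputable def lineRestriction (u w : σ → k) : MvPolynomial σ k →ₐ[k] Polynomial k :=
  aeval fun i => Polynomial.C (u i) + Polynomial.C (w i) * Polynomial.X

theorem X_dvd_lineRestriction_iff {u w : σ → k} {g : MvPolynomial σ k} :
    Polynomial.X ∣ lineRestriction u w g ↔ eval u g = 0 := by
  have h : (Polynomial.aeval (0 : k)).comp (lineRestriction u w) = aeval u := by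
    ext i
    simp [lineRestriction]
  rw [Polynomial.X_dvd_iff, Polynomial.coeff_zero_eq_aeval_zero, ← AlgHom.comp_apply, h,
    aeval_eq_eval]

theorem X_pow_dvd_lineRestriction_of_mem_productSpan {p : ι → MvPolynomial σ k} {u : σ → k}
    (h : ∀ i, eval u (p i) = 0) (w : σ → k) {D : ℕ} {q : MvPolynomial σ k}
    (hq : q ∈ productSpan p D) : Polynomial.X ^ D ∣ lineRestriction u w q := by
  induction hq using Submodule.span_induction with
  | mem q hq =>
    obtain ⟨e, rfl, rfl⟩ := hq
    rw [map_prod, ← Finset.prod_pow_eq_pow_sum]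
    refine Finset.prod_dvd_prod_of_dvd _ _ fun i _ => ?_
    rw [map_pow]
    exact pow_dvd_pow_of_dvd (X_dvd_lineRestriction_iff.2 (h i)) _
  | zero => simp
  | add x y _ _ hx hy => rw [map_add]; exact dvd_add hx hy
  | smul c x _ hx =>
    rw [map_smul, Polynomial.smul_eq_C_mul]
    exact dvd_mul_of_dvd_right hx _

theorem exists_form_lineRestriction_eq {u : σ → k} (hu : u ≠ 0) [Nontrivial σ] :
    ∃ w : σ → k, ∀ j m, j ≤ m → ∃ g : MvPolynomial σ k, ∃ c : k,
      g.IsHomogeneous m ∧ c ≠ 0 ∧ lineRestriction u w g = Polynomial.C c * Polynomial.X ^ j := by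
  classical
  obtain ⟨a, ha : u a ≠ 0⟩ := Function.ne_iff.1 hu
  obtain ⟨b, hb⟩ := exists_ne a
  let l : MvPolynomial σ k := X b - C (u b / u a) * X a
  have hl : l.IsHomogeneous 1 := (isHomogeneous_X k b).sub (isHomogeneous_C_mul_X _ a)
  have hXa : lineRestriction u (Pi.single b 1) (X a) = Polynomial.C (u a) := by
    simp [lineRestriction, hb.symm]
  have hXb : lineRestriction u (Pi.single b 1) (X b) = Polynomial.C (u b) + Polynomial.X := by
    simp [lineRestriction]
  have hθl : lineRestriction u (Pi.single b 1) l = Polynomial.X := by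
    simp only [l, map_sub, map_mul, hXa, hXb, algHom_C, Polynomial.algebraMap_eq]
    rw [← Polynomial.C_mul, div_mul_cancel₀ _ ha, add_sub_cancel_left]
  refine ⟨Pi.single b 1, fun j m hj => ⟨X a ^ (m - j) * l ^ j, u a ^ (m - j), ?_,
    pow_ne_zero _ ha, by simp [hθl, hXa]⟩⟩
  simpa [Nat.sub_add_cancel hj] using (isHomogeneous_X_pow (R := k) a (m - j)).mul (hl.pow j)

/-- The products of degree `D` vanish to order `D` at a base point, whereas forms attain every
order of vanishing along a line through it. -/
theorem hasUnboundedGap_of_eval_eq_zero [Finite σ] [Nontrivial σ] {s : ℕ} (hs : 0 < s)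
    {p : ι → MvPolynomial σ k} (hp : ∀ i, (p i).IsHomogeneous s) {u : σ → k} (hu : u ≠ 0)
    (h : ∀ i, eval u (p i) = 0) : HasUnboundedGap p s := by
  obtain ⟨w, hw⟩ := exists_form_lineRestriction_eq hu
  intro N
  filter_upwards [Filter.eventually_ge_atTop N] with D hD
  let K (j : ℕ) : Submodule k (MvPolynomial σ k) := homogeneousSubmodule σ k (D * s) ⊓
    ((Ideal.span {Polynomial.X ^ j}).restrictScalars k).comap (lineRestriction u w).toLinearMap
  have mem_K {j : ℕ} {g : MvPolynomial σ k} : g ∈ K j ↔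
      g.IsHomogeneous (D * s) ∧ Polynomial.X ^ j ∣ lineRestriction u w g := by
    simp [K, Ideal.mem_span_singleton]
  have hK : ∀ j < D, K (j + 1) < K j := fun j hj => by
    refine lt_of_le_not_ge (fun g hg => ?_) fun hle => ?_
    · exact mem_K.2 ⟨(mem_K.1 hg).1, (pow_dvd_pow _ j.le_succ).trans (mem_K.1 hg).2⟩
    · obtain ⟨g, c, hg, hc, hgj⟩ := hw j (D * s) (hj.le.trans (Nat.le_mul_of_pos_right D hs))
      have hdvd := (mem_K.1 (hle (mem_K.2 ⟨hg, hgj ▸ dvd_mul_left _ _⟩))).2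
      rw [hgj, Polynomial.X_pow_dvd_iff] at hdvd
      simpa [hc] using hdvd j j.lt_succ_self
  have hK0 : K 0 = homogeneousSubmodule σ k (D * s) := by ext; simp [mem_K]
  have : Module.Finite k (K 0) := hK0 ▸ inferInstance
  obtain ⟨_, hrank⟩ := finrank_add_le_of_succ_lt hK
  have hle : productSpan p D ≤ K D := fun q hq => mem_K.2
    ⟨productSpan_le_homogeneousSubmodule hp D hq,
      X_pow_dvd_lineRestriction_of_mem_productSpan h w hq⟩
  have := Submodule.finrank_mono hle
  rw [hK0] at hrank
  omega

end BasePoint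

section KrullHeight

variable {τ ι k : Type*} [Field k]

theorem height_le_card_of_mem_minimalPrimes_span_range {R : Type*} [CommRing R] [IsNoetherianRing R]
    [Fintype ι] {f : ι → R} {P : Ideal R} (hP : P ∈ (Ideal.span (Set.range f)).minimalPrimes) :
    P.height ≤ Fintype.card ι := by
  refine (Ideal.height_le_card_of_mem_minimalPrimes_span (Set.finite_range f) hP).trans ?_
  rw [← Set.image_univ, ← Nat.card_eq_fintype_card, ← Set.ncard_univ]
  exact_mod_cast Set.ncard_image_le

open Classical in
/-- The substitution setting the variables in `S` to zero, used to produce chains of primes. -/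
noncomputable def killVars (k : Type*) [Field k] (S : Finset τ) :
    MvPolynomial τ k →ₐ[k] MvPolynomial τ k :=
  aeval fun j => if j ∈ S then 0 else X j

theorem killVars_X_of_mem {S : Finset τ} {j : τ} (hj : j ∈ S) : killVars k S (X j) = 0 := by
  simp [killVars, hj]

theorem killVars_X_of_notMem {S : Finset τ} {j : τ} (hj : j ∉ S) : killVars k S (X j) = X j := by
  simp [killVars, hj]

theorem killVars_eq_zero_of_subset {S T : Finset τ} (hST : S ⊆ T) {q : MvPolynomial τ k}
    (hq : killVars k S q = 0) : killVars k T q = 0 := by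
  have hcomp : (killVars k T).comp (killVars k S) = killVars k T := by
    ext1 j
    by_cases hj : j ∈ S
    · simp [killVars_X_of_mem hj, killVars_X_of_mem (hST hj)]
    · simp [killVars_X_of_notMem hj]
  rw [← hcomp, AlgHom.comp_apply, hq, map_zero]

theorem killVars_X_pow_mul_X_pow_eq_zero_iff {a b : ℕ} (ha : 0 < a) (hb : 0 < b) {S : Finset τ}
    {i j : τ} :
    killVars k S (X i ^ a * X j ^ b) = 0 ↔ i ∈ S ∨ j ∈ S := by
  have hX : ∀ i, killVars k S (X i) = 0 ↔ i ∈ S := fun i =>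
    ⟨fun h => by_contra fun hi => X_ne_zero i ((killVars_X_of_notMem hi).symm.trans h),
      killVars_X_of_mem⟩
  rw [map_mul, map_pow, map_pow, mul_eq_zero, pow_eq_zero_iff ha.ne', pow_eq_zero_iff hb.ne', hX,
    hX]

theorem card_le_height_ker_killVars_comp [DecidableEq τ] {A : Type*} [CommRing A]
    (f : A →+* MvPolynomial τ k) (S : Finset τ)
    (hS : ∀ j ∈ S, ∃ g, killVars k (S.erase j) (f g) ≠ 0 ∧ killVars k {j} (f g) = 0) :
    (S.card : ℕ∞) ≤ (RingHom.ker ((killVars k S).toRingHom.comp f)).height := by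
  induction S using Finset.induction_on with
  | empty => simp
  | insert j S hj ih =>
    have hS' : ∀ i ∈ S, ∃ g, killVars k (S.erase i) (f g) ≠ 0 ∧ killVars k {i} (f g) = 0 := by
      intro i hi
      obtain ⟨g, hg, hgi⟩ := hS i (Finset.mem_insert_of_mem hi)
      exact ⟨g, mt (killVars_eq_zero_of_subset
        (Finset.erase_subset_erase i (Finset.subset_insert j S))) hg, hgi⟩
    obtain ⟨g, hg, hgj⟩ := hS j (Finset.mem_insert_self j S)
    rw [Finset.erase_insert hj] at hg
    have hlt : RingHom.ker ((killVars k S).toRingHom.comp f) <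
        RingHom.ker ((killVars k (insert j S)).toRingHom.comp f) :=
      lt_of_le_not_ge (fun q hq => killVars_eq_zero_of_subset (Finset.subset_insert j S) hq)
        fun hle => hg (hle (killVars_eq_zero_of_subset (by simp) hgj))
    have hprime : ∀ T, (RingHom.ker ((killVars k T).toRingHom.comp f)).IsPrime :=
      fun T => RingHom.ker_isPrime _
    have := hprime S
    have := hprime (insert j S)
    rw [Finset.card_insert_of_notMem hj, Nat.cast_add_one]
    exact (add_le_add_left (ih hS') 1).trans (Ideal.height_add_one_le_of_lt_of_isPrime hlt)

theorem card_add_one_le_height_ker_constantCoeff_comp [DecidableEq τ] {A : Type*} [CommRing A]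
    (f : A →+* MvPolynomial τ k) (S : Finset τ)
    (hS : ∀ j ∈ S, ∃ g, killVars k (S.erase j) (f g) ≠ 0 ∧ killVars k {j} (f g) = 0)
    (hg : ∃ g, killVars k S (f g) ≠ 0 ∧ constantCoeff (f g) = 0) :
    (S.card : ℕ∞) + 1 ≤ (RingHom.ker (constantCoeff.comp f)).height := by
  have hcomp : constantCoeff.comp (killVars k S).toRingHom = constantCoeff := by
    ext j
    · simp [algHom_C]
    · by_cases hj : j ∈ S
      · simp [killVars_X_of_mem hj]
      · simp [killVars_X_of_notMem hj]
  have hlt : RingHom.ker ((killVars k S).toRingHom.comp f) <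
      RingHom.ker (constantCoeff.comp f) := by
    obtain ⟨g, hg, hg0⟩ := hg
    refine lt_of_le_not_ge (fun q hq => ?_) fun hle => hg (hle hg0)
    rw [RingHom.mem_ker] at hq ⊢
    rw [← hcomp, RingHom.comp_assoc, RingHom.comp_apply, hq, map_zero]
  have := RingHom.ker_isPrime ((killVars k S).toRingHom.comp f)
  have := RingHom.ker_isPrime (constantCoeff.comp f)
  exact (add_le_add_left (card_le_height_ker_killVars_comp f S hS) 1).trans
    (Ideal.height_add_one_le_of_lt_of_isPrime hlt)

theorem card_le_height_vanishingIdeal_singleton [Fintype τ] (a : τ → k) :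
    (Fintype.card τ : ℕ∞) ≤ (vanishingIdeal k {a} : Ideal (MvPolynomial τ k)).height := by
  classical
  let f : MvPolynomial τ k →ₐ[k] MvPolynomial τ k := aeval fun j => X j + C (a j)
  refine (card_le_height_ker_killVars_comp f.toRingHom Finset.univ fun j _ => ?_).trans
    (Ideal.height_mono fun q hq => ?_)
  · refine ⟨X j - C (a j), ?_⟩
    simp [f, algHom_C, killVars_X_of_mem, killVars_X_of_notMem, algebraMap_eq]
  · have hf : (aeval 0).comp ((killVars k Finset.univ).comp f) = (aeval a : _ →ₐ[k] k) := by
      ext j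
      simp [f, killVars_X_of_mem, algHom_C]
    have hq : killVars k Finset.univ (f q) = 0 := hq
    rw [mem_vanishingIdeal_singleton_iff, ← hf, AlgHom.comp_apply, AlgHom.comp_apply, hq, map_zero]

theorem infinite_setOf_eval_eq_zero [IsAlgClosed k] [Fintype τ] [Fintype ι]
    (hcard : Fintype.card ι < Fintype.card τ) {f : ι → MvPolynomial τ k} {a : τ → k}
    (ha : ∀ i, eval a (f i) = 0) {g : MvPolynomial τ k} (hg : eval a g ≠ 0) :
    {b | (∀ i, eval b (f i) = 0) ∧ eval b g ≠ 0}.Infinite := by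
  intro hfin
  have hIa : Ideal.span (Set.range f) ≤ vanishingIdeal k {a} := by
    rw [Ideal.span_le]
    rintro _ ⟨i, rfl⟩
    simpa [mem_vanishingIdeal_singleton_iff, aeval_eq_eval] using ha i
  obtain ⟨P, hP, hPa⟩ := Ideal.exists_minimalPrimes_le hIa
  have hprime : P.IsPrime := hP.1.1
  have hgP : g ∉ P := fun h => hg <| by
    simpa [mem_vanishingIdeal_singleton_iff, aeval_eq_eval] using hPa h
  have hle :
      (hfin.toFinset.inf fun b => (vanishingIdeal k {b} : Ideal (MvPolynomial τ k))) ≤ P := by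
    refine fun q hq => (hprime.mem_or_mem ?_).resolve_left hgP
    rw [← IsPrime.vanishingIdeal_zeroLocus (K := k) P]
    intro b hb
    by_cases hgb : eval b g = 0
    · simp [aeval_eq_eval, hgb]
    · have hbf : ∀ i, eval b (f i) = 0 := fun i => by
        simpa [aeval_eq_eval] using hb _ (hP.1.2 (Ideal.subset_span ⟨i, rfl⟩))
      have hqb := Submodule.mem_finsetInf.1 hq b (by simpa using ⟨hbf, hgb⟩)
      rw [map_mul, (mem_vanishingIdeal_singleton_iff _ _).1 hqb, mul_zero]
  obtain ⟨b, -, hb⟩ := hprime.inf_le'.1 hle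
  have := (card_le_height_vanishingIdeal_singleton b).trans
    ((Ideal.height_mono hb).trans (height_le_card_of_mem_minimalPrimes_span_range hP))
  exact hcard.not_ge (by exact_mod_cast this)

theorem exists_ne_zero_eval_eq_zero [IsAlgClosed k] [Fintype τ] [Fintype ι]
    (hcard : Fintype.card ι < Fintype.card τ) {f : ι → MvPolynomial τ k}
    (hf : ∀ i, eval 0 (f i) = 0) : ∃ u ≠ 0, ∀ i, eval u (f i) = 0 := by
  obtain ⟨u, ⟨hu, -⟩, hne⟩ :=
    (infinite_setOf_eval_eq_zero hcard hf (g := 1) (by simp)).exists_notMem_finset {0}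
  exact ⟨u, by simpa using hne, hu⟩

end KrullHeight

section PureSubring

variable {R S : Type*} [CommRing R] [CommRing S] [Algebra R S]

theorem comap_map_algebraMap_of_retraction (π : S →ₗ[R] R) (hπ : π 1 = 1) (I : Ideal R) :
    (I.map (algebraMap R S)).comap (algebraMap R S) = I := by
  refine le_antisymm (fun r hr => ?_) Ideal.le_comap_map
  have hle : (I • ⊤ : Submodule R S) ≤ Submodule.comap π I := Submodule.smul_le.2 fun a ha y _ => by
    rw [Submodule.mem_comap, map_smul]
    exact I.mul_mem_right _ ha
  have hr : algebraMap R S r ∈ (I • ⊤ : Submodule R S) := by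
    rw [Ideal.smul_top_eq_map]
    exact hr
  have hπr : π (algebraMap R S r) = r := by
    rw [Algebra.algebraMap_eq_smul_one, map_smul, hπ, smul_eq_mul, mul_one]
  exact hπr ▸ hle hr

theorem isNoetherianRing_of_retraction [IsNoetherianRing S] (π : S →ₗ[R] R) (hπ : π 1 = 1) :
    IsNoetherianRing R := by
  have hinj : Function.Injective (Ideal.map (algebraMap R S)) :=
    Function.LeftInverse.injective (comap_map_algebraMap_of_retraction π hπ)
  have hmono : Monotone (Ideal.map (algebraMap R S)) := fun _ _ h => Ideal.map_mono h
  exact isNoetherian_iff'.2 (hmono.strictMono_of_injective hinj).wellFoundedGT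

end PureSubring

section PureSubalgebra

theorem height_le_card_of_forall_eval_eq_zero {k τ ι : Type*} [Field k] [IsAlgClosed k] [Finite τ]
    [Fintype ι] {R : Subalgebra k (MvPolynomial τ k)} (π : MvPolynomial τ k →ₗ[R] R) (hπ : π 1 = 1)
    {f : ι → R} {Q : Ideal R} [hQ : Q.IsPrime] (hf : ∀ i, f i ∈ Q)
    (hzero : ∀ g ∈ Q, ∀ c, (∀ i, eval c (f i).1 = 0) → eval c g.1 = 0) :
    Q.height ≤ Fintype.card ι := by
  have := isNoetherianRing_of_retraction π hπ
  have hle : Ideal.span (Set.range f) ≤ Q := by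
    rw [Ideal.span_le]
    rintro _ ⟨i, rfl⟩
    exact hf i
  have hrad : Q ≤ (Ideal.span (Set.range f)).radical := by
    intro g hg
    have hmem : g.1 ∈ ((Ideal.span (Set.range f)).map (algebraMap R _)).radical := by
      rw [← vanishingIdeal_zeroLocus_eq_radical (K := k)]
      exact fun c hc => hzero g hg c fun i =>
        hc _ (Ideal.mem_map_of_mem _ (Ideal.subset_span ⟨i, rfl⟩))
    obtain ⟨N, hN⟩ := hmem
    refine ⟨N, ?_⟩
    rw [← comap_map_algebraMap_of_retraction π hπ (Ideal.span _), Ideal.mem_comap, map_pow]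
    exact hN
  exact height_le_card_of_mem_minimalPrimes_span_range
    ⟨⟨hQ, hle⟩, fun P hP _ => hrad.trans (hP.1.radical_le_iff.2 hP.2)⟩

end PureSubalgebra

section WeightZero

variable {k : Type*} [Field k] {σ : Type*} (w : σ → ℤ)

/-- The subalgebra of polynomials of weight zero. -/
def weightZeroSubalgebra (k : Type*) [Field k] (w : σ → ℤ) : Subalgebra k (MvPolynomial σ k) where
  carrier := {g | IsWeightedHomogeneous w g 0}
  mul_mem' hf hg := by simpa using hf.mul hg
  add_mem' hf hg := hf.add hg
  algebraMap_mem' c := isWeightedHomogeneous_C w c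

theorem weightedHomogeneousComponent_zero_mul {f : MvPolynomial σ k}
    (hf : IsWeightedHomogeneous w f 0) (g : MvPolynomial σ k) :
    weightedHomogeneousComponent w 0 (f * g) = f * weightedHomogeneousComponent w 0 g := by
  let _ := weightedGradedAlgebra k w
  have := DirectSum.coe_decompose_mul_of_left_mem_zero (weightedHomogeneousSubmodule k w)
    (a := f) (b := g) (j := 0) hf
  rw [← decompose'_apply, ← decompose'_apply]
  exact this

/-- The projection of the polynomial ring onto its subalgebra of weight zero. -/
noncomputable def weightZeroRetraction (k : Type*) [Field k] (w : σ → ℤ) :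
    MvPolynomial σ k →ₗ[weightZeroSubalgebra k w] weightZeroSubalgebra k w where
  toFun g := ⟨weightedHomogeneousComponent w 0 g,
    weightedHomogeneousComponent_isWeightedHomogeneous 0 g⟩
  map_add' f g := by ext1; simp
  map_smul' r g := by
    ext1
    exact weightedHomogeneousComponent_zero_mul w r.2 g

theorem weightZeroRetraction_one : weightZeroRetraction k w 1 = 1 := by
  ext1
  exact (isWeightedHomogeneous_one k w).weightedHomogeneousComponent_same

end WeightZero

section Biprojective

variable {k σ τ : Type*} [Field k] {a b : ℕ}

/-- The weights, on two groups of variables, for which forms of bidegree `(a, b)` have weight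
zero. -/
def bidegreeWeight (σ τ : Type*) (a b : ℕ) : σ ⊕ τ → ℤ :=
  Sum.elim (fun _ => b) fun _ => -a

theorem isWeightedHomogeneous_rename_inl {g : MvPolynomial σ k} (hg : g.IsHomogeneous a) :
    IsWeightedHomogeneous (bidegreeWeight σ τ a b) (rename Sum.inl g) (a * b) := by
  intro c hc
  obtain ⟨u, rfl, hu⟩ := coeff_rename_ne_zero _ _ _ hc
  rw [← hg hu, Finsupp.weight_apply, Finsupp.weight_apply, Finsupp.sum_mapDomain_index
    (by simp) (by simp [add_mul]), Finsupp.sum, Finsupp.sum]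
  simp [bidegreeWeight, Finset.sum_mul]

theorem isWeightedHomogeneous_rename_inr {g : MvPolynomial τ k} (hg : g.IsHomogeneous b) :
    IsWeightedHomogeneous (bidegreeWeight σ τ a b) (rename Sum.inr g) (-(a * b)) := by
  intro c hc
  obtain ⟨u, rfl, hu⟩ := coeff_rename_ne_zero _ _ _ hc
  rw [← hg hu, Finsupp.weight_apply, Finsupp.weight_apply, Finsupp.sum_mapDomain_index
    (by simp) (by simp [add_mul]), Finsupp.sum, Finsupp.sum]
  simp [bidegreeWeight, Finset.mul_sum, mul_comm]

theorem rename_mul_rename_mem_weightZeroSubalgebra {g : MvPolynomial σ k} (hg : g.IsHomogeneous a)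
    {h : MvPolynomial τ k} (hh : h.IsHomogeneous b) :
    rename Sum.inl g * rename Sum.inr h ∈ weightZeroSubalgebra k (bidegreeWeight σ τ a b) := by
  have := (isWeightedHomogeneous_rename_inl (τ := τ) (b := b) hg).mul
    (isWeightedHomogeneous_rename_inr (σ := σ) (a := a) hh)
  rwa [add_neg_cancel] at this

theorem X_pow_mul_X_pow_mem_weightZeroSubalgebra (i : σ) (j : τ) :
    X (.inl i) ^ a * X (.inr j) ^ b ∈ weightZeroSubalgebra k (bidegreeWeight σ τ a b) := by
  simpa using rename_mul_rename_mem_weightZeroSubalgebra (isHomogeneous_X_pow (R := k) i a)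
    (isHomogeneous_X_pow j b)

theorem eval_sumElim_eq_zero_of_mem_weightZeroSubalgebra [Finite σ] [Finite τ] (ha : 0 < a)
    (hb : 0 < b) {g : MvPolynomial (σ ⊕ τ) k}
    (hg : g ∈ weightZeroSubalgebra k (bidegreeWeight σ τ a b))
    (hg0 : constantCoeff g = 0) {x : σ → k} {y : τ → k} (h : x = 0 ∨ y = 0) :
    eval (Sum.elim x y) g = 0 := by
  have := Fintype.ofFinite σ
  have := Fintype.ofFinite τ
  rw [eval_eq']
  refine Finset.sum_eq_zero fun m hm => mul_eq_zero_of_right _ ?_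
  rw [mem_support_iff] at hm
  have hm0 : m ≠ 0 := fun h => hm (h ▸ hg0)
  have hsum : (∑ i, m (.inl i)) * b = (∑ j, m (.inr j)) * a := by
    have hwt := hg hm
    rw [Finsupp.weight_apply, Finsupp.sum_fintype _ _ (by simp), Fintype.sum_sum_type] at hwt
    simp only [bidegreeWeight, Sum.elim_inl, Sum.elim_inr, smul_neg, Finset.sum_neg_distrib,
      nsmul_eq_mul, ← Finset.sum_mul] at hwt
    zify
    linear_combination hwt
  have hiff : ∑ i, m (.inl i) = 0 ↔ ∑ j, m (.inr j) = 0 := by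
    rw [← mul_eq_zero_iff_right hb.ne', hsum, mul_eq_zero_iff_right ha.ne']
  have hne : ∑ i, m (.inl i) ≠ 0 := fun h0 => hm0 <| Finsupp.ext <| Sum.rec
    (fun i => Finset.sum_eq_zero_iff.1 h0 i (Finset.mem_univ i))
    fun j => Finset.sum_eq_zero_iff.1 (hiff.1 h0) j (Finset.mem_univ j)
  obtain ⟨i, -, hi⟩ := Finset.exists_ne_zero_of_sum_ne_zero hne
  obtain ⟨j, -, hj⟩ := Finset.exists_ne_zero_of_sum_ne_zero (mt hiff.2 hne)
  rw [Fintype.prod_sum_type]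
  rcases h with rfl | rfl
  · exact mul_eq_zero_of_left (Finset.prod_eq_zero (Finset.mem_univ i) (by simp [hi])) _
  · exact mul_eq_zero_of_right _ (Finset.prod_eq_zero (Finset.mem_univ j) (by simp [hj]))

variable [Fintype σ] [Fintype τ]

/-- The chain of primes sets all variables but one of each group to zero, one at a time, and then
the remaining two together. -/
theorem card_add_card_le_height_ker_constantCoeff_add_one [Nonempty σ] [Nonempty τ] (ha : 0 < a)
    (hb : 0 < b) {R : Subalgebra k (MvPolynomial (σ ⊕ τ) k)}
    (hR : ∀ i j, X (.inl i) ^ a * X (.inr j) ^ b ∈ R) :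
    ((Fintype.card σ + Fintype.card τ : ℕ) : ℕ∞) ≤
      (RingHom.ker ((constantCoeff (R := k)).comp R.val.toRingHom)).height + 1 := by
  classical
  obtain ⟨i₀⟩ := ‹Nonempty σ›
  obtain ⟨j₀⟩ := ‹Nonempty τ›
  let S : Finset (σ ⊕ τ) := {.inl i₀, .inr j₀}ᶜ
  let g (i : σ) (j : τ) : R := ⟨_, hR i j⟩
  have hg {T : Finset (σ ⊕ τ)} {i : σ} {j : τ} :
      killVars k T (R.val (g i j)) = 0 ↔ .inl i ∈ T ∨ .inr j ∈ T :=
    killVars_X_pow_mul_X_pow_eq_zero_iff ha hb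
  have hcard : Fintype.card σ + Fintype.card τ = S.card + 1 + 1 := by
    have hS : Finset.card {Sum.inl i₀, Sum.inr j₀} + S.card = _ :=
      Finset.card_add_card_compl _
    rw [Finset.card_pair (by simp), Fintype.card_sum] at hS
    omega
  rw [hcard, Nat.cast_add_one, Nat.cast_add_one]
  refine add_le_add_left (card_add_one_le_height_ker_constantCoeff_comp _ S ?_ ?_) 1
  · rintro (i | j) -
    · exact ⟨g i j₀, hg.not.2 (by simp [S]), hg.2 (by simp)⟩
    · exact ⟨g i₀ j, hg.not.2 (by simp [S]), hg.2 (by simp)⟩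
  · exact ⟨g i₀ j₀, hg.not.2 (by simp [S]), by simp [g, ha.ne']⟩

theorem exists_ne_zero_eval_sumElim_eq_zero [IsAlgClosed k] [Nonempty σ] [Nonempty τ] {ι : Type*}
    [Fintype ι] (hcard : Fintype.card ι + 1 < Fintype.card σ + Fintype.card τ) (ha : 0 < a)
    (hb : 0 < b) {f : ι → MvPolynomial (σ ⊕ τ) k}
    (hf : ∀ i, f i ∈ weightZeroSubalgebra k (bidegreeWeight σ τ a b))
    (hf0 : ∀ i, constantCoeff (f i) = 0) :
    ∃ x ≠ 0, ∃ y ≠ 0, ∀ i, eval (Sum.elim x y) (f i) = 0 := by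
  by_contra! hno
  have hprime := RingHom.ker_isPrime ((constantCoeff (R := k)).comp
    (weightZeroSubalgebra k (bidegreeWeight σ τ a b)).val.toRingHom)
  have hle := height_le_card_of_forall_eval_eq_zero (weightZeroRetraction k _)
    (weightZeroRetraction_one _) (f := fun i => ⟨f i, hf i⟩) (hQ := hprime) hf0 fun g hg c hc => by
      rw [← Sum.elim_comp_inl_inr c] at hc ⊢
      refine eval_sumElim_eq_zero_of_mem_weightZeroSubalgebra ha hb g.2 hg ?_
      by_contra! hxy
      obtain ⟨i, hi⟩ := hno _ hxy.1 _ hxy.2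
      exact hi (hc i)
  have hge := card_add_card_le_height_ker_constantCoeff_add_one ha hb
    X_pow_mul_X_pow_mem_weightZeroSubalgebra (k := k) (σ := σ) (τ := τ)
  have : Fintype.card σ + Fintype.card τ ≤ Fintype.card ι + 1 := by
    exact_mod_cast hge.trans (add_le_add_left hle 1)
  omega

/-- The equations `dirDeriv v x (p i) = 0` have bidegree `(s - 1, 1)` in `(x, v)`. -/
theorem exists_dirDeriv_eq_zero [IsAlgClosed k] [Nonempty σ] {ι : Type*} [Fintype ι] {s : ℕ}
    (hs : 2 ≤ s) (hcard : Fintype.card ι + 1 < 2 * Fintype.card σ) {p : ι → MvPolynomial σ k}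
    (hp : ∀ i, (p i).IsHomogeneous s) : ∃ x ≠ 0, ∃ v ≠ 0, ∀ i, dirDeriv v x (p i) = 0 := by
  let f (i : ι) : MvPolynomial (σ ⊕ σ) k :=
    ∑ j, rename Sum.inl (pderiv j (p i)) * rename Sum.inr (X j)
  have hf : ∀ i, f i ∈ weightZeroSubalgebra k (bidegreeWeight σ σ (s - 1) 1) := fun i =>
    sum_mem fun j _ => rename_mul_rename_mem_weightZeroSubalgebra (hp i).pderiv
      (isHomogeneous_X k j)
  have heval : ∀ i x v, eval (Sum.elim x v) (f i) = dirDeriv v x (p i) := fun i x v => by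
    simp [f, dirDeriv_apply, eval_rename, mul_comm]
  simpa only [heval] using exists_ne_zero_eval_sumElim_eq_zero (by omega) (by omega) one_pos hf
    fun i => by simp [f]

end Biprojective

theorem exists_dotProduct_eq_one {σ k : Type*} [Fintype σ] [Field k] {v : σ → k} (hv : v ≠ 0) :
    ∃ e : σ → k, e ⬝ᵥ v = 1 := by
  classical
  obtain ⟨j, hj : v j ≠ 0⟩ := Function.ne_iff.1 hv
  exact ⟨Pi.single j (v j)⁻¹, by simp [hj]⟩

section TranscendentalPerturbation

variable {L K : Type*} [Field L] [Field K] [Algebra L K] {t : K}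

theorem eq_zero_of_mulVec_eq_transcendental_smul {n : Type*} [Fintype n] (ht : Transcendental L t)
    {M : Matrix n n L} {w : n → K} (h : M.map (algebraMap L K) *ᵥ w = t • w) : w = 0 := by
  classical
  by_contra hw
  have hdet : ((M.map (algebraMap L K)).charpoly).eval t = 0 := by
    rw [Matrix.eval_charpoly, ← Matrix.exists_mulVec_eq_zero_iff]
    refine ⟨w, hw, ?_⟩
    rw [Matrix.sub_mulVec, h, Matrix.scalar_apply, ← Matrix.smul_one_eq_diagonal,
      Matrix.smul_mulVec, Matrix.one_mulVec, sub_self]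
  refine ht ⟨M.charpoly, M.charpoly_monic.ne_zero, ?_⟩
  rwa [← Polynomial.eval_map_algebraMap, ← Matrix.charpoly_map]

/-- On the complement `e ⬝ᵥ w = 0` of `v`, the perturbed equation says that the square matrix
`-E' * M` has eigenvalue `t`. -/
theorem eq_zero_of_add_transcendental_smul_mulVec_eq_zero {σ ι : Type*} [Fintype σ] [Fintype ι]
    [DecidableEq σ] (ht : Transcendental L t) {M E : Matrix ι σ L} {E' : Matrix σ ι L}
    (hE : E' * E = 1) {v e : σ → L} {w : σ → K} (hew : (algebraMap L K ∘ e) ⬝ᵥ w = 0)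
    (hw : (M.map (algebraMap L K) +
      t • (E * (1 - Matrix.vecMulVec v e)).map (algebraMap L K)) *ᵥ w = 0) : w = 0 := by
  have hmap : (1 - Matrix.vecMulVec v e).map (algebraMap L K) =
      1 - Matrix.vecMulVec (algebraMap L K ∘ v) (algebraMap L K ∘ e) := by
    ext i j
    simp [Matrix.vecMulVec_apply, Matrix.one_apply, apply_ite]
  have hproj : (E' * (E * (1 - Matrix.vecMulVec v e))).map (algebraMap L K) *ᵥ w = w := by
    rw [← Matrix.mul_assoc, hE, Matrix.one_mul, hmap, Matrix.sub_mulVec, Matrix.one_mulVec,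
      Matrix.vecMulVec_mulVec, hew]
    simp
  have heigen : (E' * M).map (algebraMap L K) *ᵥ w + t • w = 0 := by
    simpa only [Matrix.add_mulVec, Matrix.mulVec_add, Matrix.smul_mulVec, Matrix.mulVec_smul,
      Matrix.mulVec_mulVec, ← Matrix.map_mul, hproj, Matrix.mulVec_zero] using
      congrArg (E'.map (algebraMap L K) *ᵥ ·) hw
  refine eq_zero_of_mulVec_eq_transcendental_smul ht (M := -(E' * M)) ?_
  rw [Matrix.map_neg _ (map_neg _), Matrix.neg_mulVec, neg_eq_iff_add_eq_zero, heigen]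

theorem exists_matrix_add_transcendental_smul_mulVec_eq_zero_iff {σ ι : Type*} [Fintype σ]
    [Fintype ι] (ht : Transcendental L t) (hcard : Fintype.card σ ≤ Fintype.card ι)
    {M : Matrix ι σ L} {v : σ → L} (hv : v ≠ 0) (h : M *ᵥ v = 0) :
    ∃ N : Matrix ι σ L, ∀ w : σ → K,
      (M.map (algebraMap L K) + t • N.map (algebraMap L K)) *ᵥ w = 0 ↔
        ∃ a : K, w = a • (algebraMap L K ∘ v) := by
  classical
  obtain ⟨ρ⟩ := Function.Embedding.nonempty_of_card_le hcard
  obtain ⟨e, he⟩ := exists_dotProduct_eq_one hv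
  let E : Matrix ι σ L := (1 : Matrix ι ι L).submatrix id ρ
  have hE : Eᵀ * E = 1 := by
    ext i j
    simp [E, Matrix.mul_apply, Matrix.one_apply]
  have hkill : (M.map (algebraMap L K) + t • (E * (1 - Matrix.vecMulVec v e)).map
      (algebraMap L K)) *ᵥ (algebraMap L K ∘ v) = 0 := by
    have hNv : (E * (1 - Matrix.vecMulVec v e)) *ᵥ v = 0 := by
      simp [← Matrix.mulVec_mulVec, Matrix.sub_mulVec, Matrix.vecMulVec_mulVec, he]
    ext i
    simp only [Matrix.add_mulVec, Matrix.smul_mulVec, Pi.add_apply, Pi.smul_apply,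
      ← RingHom.map_mulVec, h, hNv]
    simp
  refine ⟨E * (1 - Matrix.vecMulVec v e), fun w =>
    ⟨fun hw => ⟨(algebraMap L K ∘ e) ⬝ᵥ w, sub_eq_zero.1 ?_⟩, ?_⟩⟩
  · refine eq_zero_of_add_transcendental_smul_mulVec_eq_zero ht (M := M) (v := v) (e := e) hE ?_ ?_
    · simp [dotProduct_sub, ← RingHom.map_dotProduct, he]
    · rw [Matrix.mulVec_sub, Matrix.mulVec_smul, hw, hkill, smul_zero, sub_zero]
  · rintro ⟨a, rfl⟩
    rw [Matrix.mulVec_smul, hkill, smul_zero]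

end TranscendentalPerturbation

section Jacobian

variable {σ ι R : Type*} [CommRing R]

/-- The matrix of the partial derivatives at the point `b` of a family of polynomials. -/
noncomputable def jacobianMatrix (p : ι → MvPolynomial σ R) (b : σ → R) : Matrix ι σ R :=
  .of fun i j => eval b (pderiv j (p i))

theorem jacobianMatrix_mulVec [Fintype σ] (p : ι → MvPolynomial σ R) (b v : σ → R) :
    jacobianMatrix p b *ᵥ v = fun i => dirDeriv v b (p i) := by
  ext i
  simp [jacobianMatrix, dirDeriv_apply, Matrix.mulVec, dotProduct, mul_comm]

theorem jacobianMatrix_map {S : Type*} [CommRing S] (φ : R →+* S) (p : ι → MvPolynomial σ R)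
    (b : σ → R) :
    jacobianMatrix (fun i => map φ (p i)) (φ ∘ b) = (jacobianMatrix p b).map φ := by
  ext i j
  simp [jacobianMatrix, pderiv_map, eval_map, ← eval₂_comp]

theorem jacobianMatrix_add_C_mul (c : R) (p q : ι → MvPolynomial σ R) (b : σ → R) :
    jacobianMatrix (fun i => p i + C c * q i) b = jacobianMatrix p b + c • jacobianMatrix q b := by
  ext i j
  simp [jacobianMatrix]

theorem exists_jacobianMatrix_eq {k : Type*} [Field k] [Finite σ] {s : ℕ} (hs : (s : k) ≠ 0)
    {b : σ → k} (hb : b ≠ 0) (M : Matrix ι σ k) :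
    ∃ q : ι → MvPolynomial σ k, (∀ i, (q i).IsHomogeneous s) ∧ jacobianMatrix q b = M := by
  classical
  have := Fintype.ofFinite σ
  obtain ⟨m, rfl⟩ := Nat.exists_eq_add_one_of_ne_zero (by rintro rfl; simp at hs : s ≠ 0)
  obtain ⟨e, heb⟩ := exists_dotProduct_eq_one hb
  refine ⟨fun i => linearForm e ^ m *
    linearForm (M i - (m / (m + 1 : ℕ) * (M i ⬝ᵥ b)) • e), fun i => ?_, ?_⟩
  · simpa using ((isHomogeneous_linearForm e).pow m).mul (isHomogeneous_linearForm _)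
  · refine Matrix.ext_of_mulVec_single fun j => ?_
    ext i
    rw [jacobianMatrix_mulVec]
    push_cast at hs
    simp [dirDeriv_mul, dirDeriv_pow, heb]
    field_simp
    ring

end Jacobian

section Perturbation

variable {L K : Type*} [Field L] [Field K] [Algebra L K] {t : K} {σ ι : Type*}

theorem finrank_productSpan_le_of_transcendental [Fintype ι] (ht : Transcendental L t)
    (p q : ι → MvPolynomial σ L) (D : ℕ) :
    Module.finrank L (productSpan p D) ≤ Module.finrank K (productSpan
      (fun i => map (algebraMap L K) (p i) + C t * map (algebraMap L K) (q i)) D) := by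
  have hinj : Function.Injective (Polynomial.aeval t : Polynomial L →ₐ[L] K).toRingHom :=
    transcendental_iff_injective.1 ht
  let P (i : ι) := map Polynomial.C (p i) + C Polynomial.X * map Polynomial.C (q i)
  have hzero : (fun i => map (Polynomial.evalRingHom (0 : L)) (P i)) = p := by
    have : (Polynomial.evalRingHom (0 : L)).comp Polynomial.C = RingHom.id L := by ext; simp
    ext1 i
    simp [P, map_map, this, MvPolynomial.map_id]
  have hmap : (fun i => map (Polynomial.aeval t : Polynomial L →ₐ[L] K).toRingHom (P i)) =
      fun i => map (algebraMap L K) (p i) + C t * map (algebraMap L K) (q i) := by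
    have : (Polynomial.aeval t : Polynomial L →ₐ[L] K).toRingHom.comp Polynomial.C =
        algebraMap L K := by
      ext
      simp
    ext1 i
    simp only [P, map_add, map_mul, map_map, this, map_C]
    simp
  have := finrank_productSpan_map_le_of_injective (Polynomial.evalRingHom (0 : L)) hinj P D
  rwa [hzero, hmap] at this

theorem exists_perturbation [Fintype σ] [Fintype ι] (ht : Transcendental L t) {s : ℕ}
    (hs : (s : L) ≠ 0) (hcard : Fintype.card σ ≤ Fintype.card ι) {p : ι → MvPolynomial σ L}
    (hp : ∀ i, (p i).IsHomogeneous s) {x v : σ → L} (hx : x ≠ 0) (hv : v ≠ 0)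
    (h : ∀ i, dirDeriv v x (p i) = 0) :
    ∃ r : ι → MvPolynomial σ K, (∀ i, (r i).IsHomogeneous s) ∧
      (∀ D, Module.finrank L (productSpan p D) ≤ Module.finrank K (productSpan r D)) ∧
      ∀ w, (∀ i, dirDeriv w (algebraMap L K ∘ x) (r i) = 0) ↔
        ∃ a : K, w = a • (algebraMap L K ∘ v) := by
  have hpv : jacobianMatrix p x *ᵥ v = 0 := by
    rw [jacobianMatrix_mulVec]
    exact funext h
  obtain ⟨N, hN⟩ :=
    exists_matrix_add_transcendental_smul_mulVec_eq_zero_iff (K := K) ht hcard hv hpv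
  obtain ⟨q, hq, rfl⟩ := exists_jacobianMatrix_eq hs hx N
  refine ⟨fun i => map (algebraMap L K) (p i) + C t * map (algebraMap L K) (q i), fun i => ?_,
    finrank_productSpan_le_of_transcendental ht p q, fun w => ?_⟩
  · exact ((hp i).map _).add (((hq i).map _).C_mul t)
  · rw [← hN, ← jacobianMatrix_map, ← jacobianMatrix_map, ← jacobianMatrix_add_C_mul,
      jacobianMatrix_mulVec, funext_iff]
    rfl

end Perturbation

theorem exists_dotProduct_eq_one_and_eq_zero {σ k : Type*} [Fintype σ] [Field k] {x v : σ → k}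
    (hv : v ≠ 0) (hx : ∀ a : k, x ≠ a • v) : ∃ c : σ → k, c ⬝ᵥ x = 1 ∧ c ⬝ᵥ v = 0 := by
  obtain ⟨e, he⟩ := exists_dotProduct_eq_one hv
  obtain ⟨c, hc⟩ := exists_dotProduct_eq_one (sub_ne_zero.2 (hx (e ⬝ᵥ x)))
  simp only [dotProduct_sub, dotProduct_smul, smul_eq_mul] at hc
  refine ⟨c - (c ⬝ᵥ v) • e, ?_, ?_⟩
  · simp only [sub_dotProduct, smul_dotProduct, smul_eq_mul]
    linear_combination hc
  · simp [sub_dotProduct, he]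

section Secants

variable {σ ι k : Type*} [Fintype σ] [Field k]

theorem exists_secant_quotient {R τ : Type*} [CommRing R] (l : τ) (g : MvPolynomial σ R) :
    ∃ h : MvPolynomial (σ ⊕ σ ⊕ τ) R, ∀ x v u,
      u l * eval (Sum.elim x (Sum.elim v u)) h = eval (x + u l • v) g - eval x g ∧
        (u l = 0 → eval (Sum.elim x (Sum.elim v u)) h = dirDeriv v x g) := by
  induction g using MvPolynomial.induction_on with
  | C c => exact ⟨0, by simp⟩
  | add f g hf hg =>
    obtain ⟨h, hh⟩ := hf
    obtain ⟨h', hh'⟩ := hg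
    refine ⟨h + h', fun x v u => ⟨?_, fun hu => ?_⟩⟩
    · simp only [map_add]
      linear_combination (hh x v u).1 + (hh' x v u).1
    · rw [map_add, map_add, (hh x v u).2 hu, (hh' x v u).2 hu]
  | mul_X f j hf =>
    obtain ⟨h, hh⟩ := hf
    refine ⟨h * (X (.inl j) + X (.inr (.inr l)) * X (.inr (.inl j))) +
      rename .inl f * X (.inr (.inl j)), fun x v u => ?_⟩
    have hfx : eval (Sum.elim x (Sum.elim v u)) (rename .inl f) = eval x f := by
      rw [eval_rename, Sum.elim_comp_inl]
    simp only [map_add, map_mul, eval_X, hfx, Sum.elim_inl, Sum.elim_inr, Pi.add_apply,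
      Pi.smul_apply, smul_eq_mul, dirDeriv_mul, dirDeriv_X]
    refine ⟨?_, fun hu => ?_⟩
    · linear_combination (x j + u l * v j) * (hh x v u).1
    · rw [(hh x v u).2 hu, hu]
      ring

/-- The points `x` and `x + t • v` have proportional values under `p`, with factor `1 + t * a`; for
`t = 0` this is read as its first-order limit. -/
def IsSecant (p : ι → MvPolynomial σ k) (x v : σ → k) (t a : k) : Prop :=
  (∀ i, eval (x + t • v) (p i) = (1 + t * a) * eval x (p i)) ∧
    (t = 0 → ∀ i, dirDeriv v x (p i) = a * eval x (p i))

theorem exists_forall_eval_eq_zero_iff_isSecant (p : ι → MvPolynomial σ k) :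
    ∃ f : ι → MvPolynomial (σ ⊕ σ ⊕ Fin 2) k, ∀ x v u,
      (∀ i, eval (Sum.elim x (Sum.elim v u)) (f i) = 0) ↔ IsSecant p x v (u 0) (u 1) := by
  choose h hh using fun i => exists_secant_quotient (0 : Fin 2) (p i)
  refine ⟨fun i => h i - X (.inr (.inr 1)) * rename .inl (p i), fun x v u => ?_⟩
  have heval : ∀ i, eval (Sum.elim x (Sum.elim v u))
      (h i - X (.inr (.inr 1)) * rename .inl (p i)) =
        eval (Sum.elim x (Sum.elim v u)) (h i) - u 1 * eval x (p i) := by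
    simp [eval_rename]
  simp only [heval, sub_eq_zero]
  refine ⟨fun H => ⟨fun i => ?_, fun hu i => ?_⟩, fun H i => ?_⟩
  · linear_combination u 0 * H i - (hh i x v u).1
  · rw [← (hh i x v u).2 hu, H]
  · by_cases hu : u 0 = 0
    · rw [(hh i x v u).2 hu, H.2 hu]
    · refine mul_left_cancel₀ hu ?_
      linear_combination (hh i x v u).1 + H.1 i

theorem IsSecant.isDegeneratePoint {p : ι → MvPolynomial σ k} {c x v : σ → k} {t a : k}
    (h : IsSecant p x v t a) (hp : ∀ u, (∀ i, eval u (p i) = 0) → u = 0) (hv : v ≠ 0)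
    (hcx : c ⬝ᵥ x = 1) (hcv : c ⬝ᵥ v = 0) :
    IsDegeneratePoint c p x ∧ IsDegeneratePoint c p (x + t • v) := by
  rcases eq_or_ne t 0 with rfl | ht
  · have hx : IsDegeneratePoint c p x := ⟨hcx, .inr ⟨v, hv, hcv, a, h.2 rfl⟩⟩
    simpa using hx
  have hne : x + t • v ≠ x := by simp [ht, hv]
  have hcy : c ⬝ᵥ (x + t • v) = 1 := by simp [dotProduct_add, hcx, hcv]
  have hunit : 1 + t * a ≠ 0 := by
    intro h0
    have := hp (x + t • v) fun i => by rw [h.1, h0, zero_mul]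
    simp [this] at hcy
  exact ⟨⟨hcx, .inl ⟨_, hne, hcy, (1 + t * a)⁻¹, fun i => by rw [h.1, inv_mul_cancel_left₀ hunit]⟩⟩,
    ⟨hcy, .inl ⟨x, hne.symm, hcx, 1 + t * a, h.1⟩⟩⟩

/-- Dimension count: the normalised secants are cut out by `card ι + 3` equations in
`2 * card σ + 2` unknowns, so none of them is isolated. -/
theorem IsSecant.exists_ne [IsAlgClosed k] [Fintype ι]
    (hcard : Fintype.card ι + 1 < 2 * Fintype.card σ) {p : ι → MvPolynomial σ k} {c e x v : σ → k}
    {t a : k} (h : IsSecant p x v t a) (hcx : c ⬝ᵥ x = 1) (hcv : c ⬝ᵥ v = 0) (hev : e ⬝ᵥ v = 1)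
    {g : MvPolynomial σ k} (hgx : eval x g ≠ 0) (hgy : eval (x + t • v) g ≠ 0) :
    ∃ x' v' t' a', IsSecant p x' v' t' a' ∧ c ⬝ᵥ x' = 1 ∧ c ⬝ᵥ v' = 0 ∧ e ⬝ᵥ v' = 1 ∧
      eval x' g ≠ 0 ∧ eval (x' + t' • v') g ≠ 0 ∧ ¬(x' = x ∧ v' = v ∧ t' = t ∧ a' = a) := by
  obtain ⟨f, hf⟩ := exists_forall_eval_eq_zero_iff_isSecant p
  obtain ⟨q, hq⟩ := exists_secant_quotient (0 : Fin 2) g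
  let F : ι ⊕ Fin 3 → MvPolynomial (σ ⊕ σ ⊕ Fin 2) k := Sum.elim f
    ![rename .inl (linearForm c) - 1, rename (.inr ∘ .inl) (linearForm c),
      rename (.inr ∘ .inl) (linearForm e) - 1]
  let G : MvPolynomial (σ ⊕ σ ⊕ Fin 2) k :=
    rename .inl g * (rename .inl g + X (.inr (.inr 0)) * q)
  have hF : ∀ x v u, (∀ i, eval (Sum.elim x (Sum.elim v u)) (F i) = 0) ↔
      IsSecant p x v (u 0) (u 1) ∧ c ⬝ᵥ x = 1 ∧ c ⬝ᵥ v = 0 ∧ e ⬝ᵥ v = 1 := by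
    intro x v u
    have hv : Sum.elim x (Sum.elim v u) ∘ (.inr ∘ .inl) = v := rfl
    simp [F, Sum.forall, hf, Fin.forall_fin_succ, eval_rename, hv, sub_eq_zero]
  have hG : ∀ x v u, eval (Sum.elim x (Sum.elim v u)) G = eval x g * eval (x + u 0 • v) g := by
    intro x v u
    simp [G, eval_rename, (hq x v u).1]
  obtain ⟨z, ⟨hz, hzG⟩, hne⟩ := (infinite_setOf_eval_eq_zero (f := F) (g := G) (by simp; omega)
    ((hF x v ![t, a]).2 ⟨h, hcx, hcv, hev⟩)
    (by rw [hG]; exact mul_ne_zero hgx hgy)).exists_notMem_finset {Sum.elim x (Sum.elim v ![t, a])}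
  obtain ⟨x', v', u, rfl⟩ : ∃ x' v' u, z = Sum.elim x' (Sum.elim v' u) :=
    ⟨z ∘ .inl, z ∘ .inr ∘ .inl, z ∘ .inr ∘ .inr, by ext (_ | _ | _) <;> rfl⟩
  obtain ⟨hsec, hcx', hcv', hev'⟩ := (hF x' v' u).1 hz
  rw [hG] at hzG
  refine ⟨x', v', u 0, u 1, hsec, hcx', hcv', hev', left_ne_zero_of_mul hzG,
    right_ne_zero_of_mul hzG, ?_⟩
  rintro ⟨rfl, rfl, rfl, rfl⟩
  refine hne ?_
  rw [Finset.mem_singleton]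
  congr 2
  ext j
  fin_cases j <;> rfl

end Secants

theorem exists_infinite_setOf_isDegeneratePoint {σ ι k : Type*} [Fintype σ] [Fintype ι] [Field k]
    [IsAlgClosed k] {s : ℕ} (hs : (s : k) ≠ 0) (hcard : Fintype.card ι + 1 < 2 * Fintype.card σ)
    {p : ι → MvPolynomial σ k} (hp : ∀ i, (p i).IsHomogeneous s)
    (hbase : ∀ u, (∀ i, eval u (p i) = 0) → u = 0) {x v : σ → k} (hx : x ≠ 0) (hv : v ≠ 0)
    (hker : ∀ w, (∀ i, dirDeriv w x (p i) = 0) ↔ ∃ a : k, w = a • v) :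
    ∃ c, {b | IsDegeneratePoint c p b}.Infinite := by
  classical
  have hxv : ∀ a : k, x ≠ a • v := fun a ha => hx <| hbase x fun i => by
    simpa [dirDeriv_self (hp i), hs] using (hker x).2 ⟨a, ha⟩ i
  obtain ⟨c, hcx, hcv⟩ := exists_dotProduct_eq_one_and_eq_zero hv hxv
  obtain ⟨e, hev⟩ := exists_dotProduct_eq_one hv
  refine ⟨c, fun hfin => ?_⟩
  obtain ⟨g, hg, -, hgx⟩ := exists_form_mem_doubleVanishingIdeal hcx (F := hfin.toFinset.erase x)
    (fun z hz => ((hfin.mem_toFinset).1 (Finset.mem_of_mem_erase hz)).1) (by simp) le_rfl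
  have huniq : ∀ b, IsDegeneratePoint c p b → eval b g ≠ 0 → b = x := fun b hb hgb => by
    by_contra hbx
    exact hgb (hg b (by simp [hbx, hb])).1
  have hsec : IsSecant p x v 0 0 := ⟨by simp, by simpa using (hker v).2 ⟨1, by simp⟩⟩
  obtain ⟨y, w, t, a, hyw, hcy, hcw, hew, hgy, hgyw, hne⟩ :=
    hsec.exists_ne hcard hcx hcv hev hgx (by simpa using hgx)
  have hw : w ≠ 0 := by
    rintro rfl
    simp at hew
  obtain ⟨hy, hyt⟩ := hyw.isDegeneratePoint hbase hw hcy hcw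
  obtain rfl := huniq y hy hgy
  obtain rfl : t = 0 := by simpa [hw] using huniq _ hyt hgyw
  -- By Euler's identity `w - (a / s) • y` lies in the kernel.
  obtain ⟨α, hα⟩ := (hker (w + (-(a / s)) • y)).1 fun i => by
    rw [dirDeriv_add_left, dirDeriv_smul_left, hyw.2 rfl, dirDeriv_self (hp i)]
    field_simp
    ring
  obtain rfl : a = 0 := by
    have := congrArg (c ⬝ᵥ ·) hα
    simpa [dotProduct_add, hcw, hcy, hcv, hs] using this
  obtain rfl : α = 1 := by
    have := congrArg (e ⬝ᵥ ·) hα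
    simpa [hew, hev, eq_comm] using this
  exact hne ⟨rfl, by simpa using hα, rfl, rfl⟩

section Main

variable {σ ι k : Type*} [Fintype σ] [Fintype ι] [Field k] [IsAlgClosed k] {s : ℕ}

theorem hasUnboundedGap_of_forall_dirDeriv_eq_zero_iff [Nontrivial σ] (hs : (s : k) ≠ 0)
    (hcard : Fintype.card ι + 1 < 2 * Fintype.card σ) {p : ι → MvPolynomial σ k}
    (hp : ∀ i, (p i).IsHomogeneous s) {x v : σ → k} (hx : x ≠ 0) (hv : v ≠ 0)
    (hker : ∀ w, (∀ i, dirDeriv w x (p i) = 0) ↔ ∃ a : k, w = a • v) : HasUnboundedGap p s := by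
  have hs₀ : 0 < s := Nat.pos_of_ne_zero fun h => hs (by simp [h])
  by_cases hbase : ∀ u, (∀ i, eval u (p i) = 0) → u = 0
  · obtain ⟨c, hc⟩ := exists_infinite_setOf_isDegeneratePoint hs hcard hp hbase hx hv hker
    exact hasUnboundedGap_of_infinite_setOf_isDegeneratePoint hs₀ hp hc
  · push Not at hbase
    obtain ⟨u, hu, hu₀⟩ := hbase
    exact hasUnboundedGap_of_eval_eq_zero hs₀ hp hu₀ hu

/-- The perturbation takes place over an algebraic closure of `k(t)`. -/
theorem hasUnboundedGap_of_isAlgClosed [Nontrivial σ] (hs : 2 ≤ s) (hsk : (s : k) ≠ 0)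
    (hcard : Fintype.card ι + 1 < 2 * Fintype.card σ) {p : ι → MvPolynomial σ k}
    (hp : ∀ i, (p i).IsHomogeneous s) : HasUnboundedGap p s := by
  have hs₀ : 0 < s := by omega
  rcases lt_or_ge (Fintype.card ι) (Fintype.card σ) with hlt | hle
  · have hzero : ∀ i, eval 0 (p i) = 0 := fun i => by
      rw [eval_zero, constantCoeff_eq, (hp i).coeff_eq_zero (by simpa using hs₀.ne)]
    obtain ⟨u, hu, h⟩ := exists_ne_zero_eval_eq_zero hlt hzero
    exact hasUnboundedGap_of_eval_eq_zero hs₀ hp hu h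
  · let K := AlgebraicClosure (RatFunc k)
    have ht : Transcendental k (algebraMap (RatFunc k) K RatFunc.X) :=
      (transcendental_algebraMap_iff (algebraMap (RatFunc k) K).injective).2
        RatFunc.transcendental_X
    obtain ⟨x, hx, v, hv, h⟩ := exists_dirDeriv_eq_zero hs hcard hp
    obtain ⟨r, hr, hpr, hker⟩ := exists_perturbation ht hsk hle hp hx hv h
    have hne : ∀ y : σ → k, y ≠ 0 → algebraMap k K ∘ y ≠ 0 := fun y hy hy₀ =>
      hy <| funext fun j => by simpa using congrFun hy₀ j
    have hsK : (s : K) ≠ 0 := by simpa using (map_ne_zero (algebraMap k K)).2 hsk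
    exact (hasUnboundedGap_of_forall_dirDeriv_eq_zero_iff hsK hcard hr (hne x hx) (hne v hv)
      hker).of_finrank_le hpr

end Main

theorem hilbert_polynomial_gap_for_2d_minus_2_forms_general {σ ι k : Type*} [Fintype σ] [Fintype ι]
    [Field k] {s : ℕ} (hs : 2 ≤ s) (hsk : (s : k) ≠ 0) (hσ : 2 ≤ Fintype.card σ)
    (hι : Fintype.card ι ≤ 2 * Fintype.card σ - 2) {p : ι → MvPolynomial σ k}
    (hp : ∀ i, (p i).IsHomogeneous s) :
    Filter.Tendsto
      (fun D : ℕ => ((Fintype.card σ + D * s - 1).choose (D * s) : ℤ) -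
        Module.finrank k (Submodule.span k
          {q | ∃ a : ι → ℕ, (∑ i, a i) = D ∧ q = ∏ i, p i ^ a i}))
      Filter.atTop Filter.atTop := by
  have : Nontrivial σ := Fintype.one_lt_card_iff_nontrivial.1 hσ
  have hgap : HasUnboundedGap (fun i => map (algebraMap k (AlgebraicClosure k)) (p i)) s :=
    hasUnboundedGap_of_isAlgClosed hs
      (by simpa using (map_ne_zero (algebraMap k (AlgebraicClosure k))).2 hsk) (by omega)
      fun i => (hp i).map _
  exact hgap.of_map.tendsto_sub

/-- let `d, s ≥ 2` and let `p_1, …, p_{2d-2}` be homogeneous polynomials of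
degree `s` in `d` variables. Writing `H(D)` for the dimension of the degree-`D` graded
piece of the subalgebra `ℝ[p_1, …, p_{2d-2}]` (the span of the products `p^a` with
`∑ a = D`) and `V(D) = C(d + Ds - 1, Ds)` for that of the Veronese algebra `V_{d,s}`, the
difference `V(D) - H(D)` tends to `+∞`; i.e. the two Hilbert polynomials have non-constant
difference. -/
theorem hilbert_polynomial_gap_for_2d_minus_2_forms
    (d s : ℕ) (hd : 2 ≤ d) (hs : 2 ≤ s)
    (p : Fin (2 * d - 2) → MvPolynomial (Fin d) ℝ)
    (hp : ∀ i, (p i).IsHomogeneous s) :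
    Filter.Tendsto
      (fun D : ℕ =>
        ((Nat.choose (d + D * s - 1) (D * s) : ℤ) -
          (Module.finrank ℝ (Submodule.span ℝ
            {q : MvPolynomial (Fin d) ℝ |
              ∃ a : Fin (2 * d - 2) → ℕ, (∑ i, a i) = D ∧ q = ∏ i, p i ^ a i}) : ℤ)))
      Filter.atTop Filter.atTop := by
  have hs₀ : (s : ℝ) ≠ 0 := Nat.cast_ne_zero.2 (by omega)
  simpa using hilbert_polynomial_gap_for_2d_minus_2_forms_general hs hs₀ (by simpa) (by simp) hp
end
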